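/- arXiv:1509.01317 — 11 statements merged into one kernel-verified Lean document; each statement's English description precedes it below -/
import Mathlib

section
/- (First inequality of Lemma 1.1.) For every ξ ≥ 0 one has K(ξ) ≥ 2W₁/(ξ^a + a_N^a), where a = α_N/(α_N+1) and W₁ = a_N^a/(2·N·M). -/
/-- First inequality of Lemma 1.1: `K(ξ) ≥ 2W₁/(ξ^a + a_N^a)` for all `ξ ≥ 0`. -/
theorem stmt5
    (N : ℕ) (hN : 1 ≤ N)
    (α : ℕ → ℝ) (hα0 : α 0 = 0) (hαmono : ∀ i < N, α i < α (i + 1))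
    (aa : ℕ → ℝ) (ha0 : 0 < aa 0) (haN : 0 < aa N) (hann : ∀ j ≤ N, 0 ≤ aa j)
    (g : ℝ → ℝ)
    (hg : ∀ t : ℝ, 0 ≤ t → g t = ∑ j ∈ Finset.range (N + 1), aa j * t ^ α j)
    (s : ℝ → ℝ) (hs : ∀ ξ : ℝ, 0 ≤ ξ → 0 ≤ s ξ ∧ s ξ * g (s ξ) = ξ)
    (K : ℝ → ℝ) (hK : ∀ ξ : ℝ, 0 ≤ ξ → K ξ = 1 / g (s ξ))
    (M : ℝ) (hMub : ∀ j ≤ N, aa j ≤ M) (hMmem : ∃ j ≤ N, aa j = M)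
    (a : ℝ) (ha : a = α N / (α N + 1))
    (W₁ : ℝ) (hW₁ : W₁ = aa N ^ a / (2 * (N : ℝ) * M)) :
    ∀ ξ : ℝ, 0 ≤ ξ → 2 * W₁ / (ξ ^ a + aa N ^ a) ≤ K ξ := by
  intro ξ hξ
  obtain ⟨hs0, hsξ⟩ := hs ξ hξ
  rw [hK ξ hξ]
  have hgs := hg (s ξ) hs0
  generalize s ξ = t at *
  have hmono : ∀ k j, j + k ≤ N → α j ≤ α (j + k) := by
    intro k
    induction k with
    | zero => intro j _; simp
    | succ k ih =>
      intro j hj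
      have h1 := ih j (by omega)
      have h2 := hαmono (j + k) (by omega)
      rw [← add_assoc]
      linarith
  have hαnn : ∀ j ≤ N, 0 ≤ α j := by
    intro j hj
    have := hmono j 0 (by omega)
    simpa [hα0] using this
  have hαle : ∀ j ≤ N, α j ≤ α N := by
    intro j hj
    have := hmono (N - j) j (by omega)
    rwa [Nat.add_sub_cancel' hj] at this
  have hM : 0 < M := lt_of_lt_of_le ha0 (hMub 0 (by omega))
  have hαN := hαnn N le_rfl
  have hpow : ∀ j, 0 ≤ t ^ α j := fun j => Real.rpow_nonneg hs0 _
  have hterm : ∀ j ≤ N, t ^ α j ≤ 1 + t ^ α N := by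
    intro j hj
    rcases le_total t 1 with h | h
    · have := Real.rpow_le_one hs0 h (hαnn j hj)
      linarith [hpow N]
    · have := Real.rpow_le_rpow_of_exponent_le h (hαle j hj)
      linarith
  have hnn : ∀ j ∈ Finset.range (N + 1), 0 ≤ aa j * t ^ α j := by
    intro j hj
    exact mul_nonneg (hann j (by simp at hj; omega)) (hpow j)
  have hgpos : 0 < g t := by
    have h := Finset.single_le_sum hnn (Finset.mem_range.2 (Nat.succ_pos N))
    rw [← hgs] at h
    simp only [hα0, Real.rpow_zero, mul_one] at h
    linarith
  have hgN : aa N * t ^ α N ≤ g t := by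
    rw [hgs]
    exact Finset.single_le_sum hnn (Finset.mem_range.2 (Nat.lt_succ_self N))
  have hgub : g t ≤ N * M * (1 + t ^ α N) := by
    rw [hgs]
    obtain ⟨n, rfl⟩ : ∃ n, N = n + 1 := ⟨N - 1, by omega⟩
    rw [Finset.sum_range_succ, Finset.sum_range_succ']
    have h1 : ∑ k ∈ Finset.range n, aa (k + 1) * t ^ α (k + 1)
        ≤ ∑ k ∈ Finset.range n, M * (1 + t ^ α (n + 1)) := by
      apply Finset.sum_le_sum
      intro k hk
      have hk' : k + 1 ≤ n + 1 := by simp at hk; omega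
      exact mul_le_mul (hMub _ hk') (hterm _ hk') (hpow _) hM.le
    simp only [Finset.sum_const, Finset.card_range, nsmul_eq_mul] at h1
    have h2 := hMub 0 (by omega)
    have h3 := mul_le_mul_of_nonneg_right (hMub (n + 1) le_rfl) (hpow (n + 1))
    rw [hα0, Real.rpow_zero]
    push_cast
    linarith
  have ha_nn : 0 ≤ a := by rw [ha]; positivity
  have hξa : aa N ^ a * t ^ α N ≤ ξ ^ a := by
    have h1 : aa N * t ^ (α N + 1) ≤ ξ := by
      rw [Real.rpow_add_one' hs0 (by positivity), ← hsξ]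
      nlinarith
    have h2 := Real.rpow_le_rpow (mul_nonneg haN.le (Real.rpow_nonneg hs0 _)) h1 ha_nn
    rw [Real.mul_rpow haN.le (Real.rpow_nonneg hs0 _), ← Real.rpow_mul hs0] at h2
    have h3 : (α N + 1) * a = α N := by rw [ha]; field_simp
    rwa [h3] at h2
  have hA : 0 < aa N ^ a := Real.rpow_pos_of_pos haN a
  have hNpos : (0 : ℝ) < N := by exact_mod_cast hN
  have hX : 0 ≤ ξ ^ a := Real.rpow_nonneg hξ a
  rw [div_le_div_iff₀ (by positivity) hgpos, hW₁]
  have e : 2 * (aa N ^ a / (2 * (N : ℝ) * M)) * g t = aa N ^ a * g t / (N * M) := by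
    field_simp
  rw [e, div_le_iff₀ (by positivity)]
  calc aa N ^ a * g t ≤ aa N ^ a * (N * M * (1 + t ^ α N)) := by gcongr
    _ = (aa N ^ a * t ^ α N + aa N ^ a) * (N * M) := by ring
    _ ≤ (ξ ^ a + aa N ^ a) * (N * M) := by gcongr
    _ = _ := by ring
end

section
/- (Second inequality of Lemma 1.1.) For every ξ > 0 one has K(ξ) ≤ W₂/ξ^a, where a = α_N/(α_N+1) and W₂ = N·M/(m·a_N^{1−a}). -/
/-- Second inequality of Lemma 1.1: `K(ξ) ≤ W₂/ξ^a` for all `ξ > 0`. -/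
theorem stmt6
    (N : ℕ) (hN : 1 ≤ N)
    (α : ℕ → ℝ) (hα0 : α 0 = 0) (hαmono : ∀ i < N, α i < α (i + 1))
    (aa : ℕ → ℝ) (ha0 : 0 < aa 0) (haN : 0 < aa N) (hann : ∀ j ≤ N, 0 ≤ aa j)
    (g : ℝ → ℝ)
    (hg : ∀ t : ℝ, 0 ≤ t → g t = ∑ j ∈ Finset.range (N + 1), aa j * t ^ α j)
    (s : ℝ → ℝ) (hs : ∀ ξ : ℝ, 0 ≤ ξ → 0 ≤ s ξ ∧ s ξ * g (s ξ) = ξ)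
    (K : ℝ → ℝ) (hK : ∀ ξ : ℝ, 0 ≤ ξ → K ξ = 1 / g (s ξ))
    (M : ℝ) (hMub : ∀ j ≤ N, aa j ≤ M) (hMmem : ∃ j ≤ N, aa j = M)
    (a : ℝ) (ha : a = α N / (α N + 1))
    (W₂ : ℝ) (hW₂ : W₂ = (N : ℝ) * M / (min (aa 0) (aa N) * aa N ^ (1 - a))) :
    ∀ ξ : ℝ, 0 < ξ → K ξ ≤ W₂ / ξ ^ a := by
  intro ξ hξ
  obtain ⟨hs0, hsg⟩ := hs ξ hξ.le
  rw [hK ξ hξ.le]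
  have hspos : 0 < s ξ := by
    rcases hs0.lt_or_eq with h | h
    · exact h
    · rw [← h] at hsg
      simp at hsg
      linarith
  have hαnn : ∀ n ≤ N, 0 ≤ α n := by
    intro n
    induction n with
    | zero => intro _; exact hα0.ge
    | succ k ih =>
      intro hk
      have h1 := ih (by omega)
      have h2 := hαmono k (by omega)
      linarith
  have hαN := hαnn N le_rfl
  have hgge : aa N * s ξ ^ α N ≤ g (s ξ) := by
    rw [hg _ hs0]
    refine Finset.single_le_sum (f := fun j => aa j * s ξ ^ α j) ?_ (by simp)
    intro j hj
    have hj' : j ≤ N := by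
      have := Finset.mem_range.mp hj
      omega
    exact mul_nonneg (hann j hj') (Real.rpow_nonneg hs0 _)
  have hlow : 0 < aa N * s ξ ^ α N := mul_pos haN (Real.rpow_pos_of_pos hspos _)
  have hgpos : 0 < g (s ξ) := lt_of_lt_of_le hlow hgge
  have h1a : 1 - a = 1 / (α N + 1) := by rw [ha]; field_simp; ring
  have h1a0 : 0 ≤ 1 - a := by rw [h1a]; positivity
  have haa : α N * (1 - a) = a := by rw [h1a, ha]; ring
  have key : ξ ^ a * aa N ^ (1 - a) ≤ g (s ξ) := by
    have e1 : (aa N * s ξ ^ α N) ^ (1 - a) = aa N ^ (1 - a) * s ξ ^ a := by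
      rw [Real.mul_rpow haN.le (Real.rpow_nonneg hs0 _), ← Real.rpow_mul hs0, haa]
    have e2 := Real.rpow_le_rpow hlow.le hgge h1a0
    rw [e1] at e2
    have e3 : ξ ^ a = s ξ ^ a * g (s ξ) ^ a := by
      rw [← Real.mul_rpow hs0 hgpos.le, hsg]
    have e4 : g (s ξ) ^ (1 - a) * g (s ξ) ^ a = g (s ξ) := by
      rw [← Real.rpow_add hgpos]; simp
    calc ξ ^ a * aa N ^ (1 - a) = (aa N ^ (1 - a) * s ξ ^ a) * g (s ξ) ^ a := by
          rw [e3]; ring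
      _ ≤ g (s ξ) ^ (1 - a) * g (s ξ) ^ a :=
          mul_le_mul_of_nonneg_right e2 (Real.rpow_nonneg hgpos.le _)
      _ = _ := e4
  have hm : 0 < min (aa 0) (aa N) := lt_min ha0 haN
  have hmM : min (aa 0) (aa N) ≤ N * M := by
    have h1 : (1 : ℝ) ≤ N := by exact_mod_cast hN
    have h2 := hMub N le_rfl
    have h3 := min_le_right (aa 0) (aa N)
    nlinarith
  have hξa : 0 < ξ ^ a := Real.rpow_pos_of_pos hξ _
  have hAa : 0 < aa N ^ (1 - a) := Real.rpow_pos_of_pos haN _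
  rw [hW₂, div_div, div_le_div_iff₀ hgpos (by positivity)]
  calc 1 * (min (aa 0) (aa N) * aa N ^ (1 - a) * ξ ^ a)
      = min (aa 0) (aa N) * (ξ ^ a * aa N ^ (1 - a)) := by ring
    _ ≤ (N * M) * g (s ξ) := mul_le_mul hmM key (by positivity) (hm.le.trans hmM)
end

section
/- (Inequality (1.12) of Lemma 1.1.) For every ξ ≥ 0 one has W₁·ξ^{2−a} − a_N/2 ≤ K(ξ)·ξ² ≤ W₂·ξ^{2−a}, where a = α_N/(α_N+1), W₁ = a_N^a/(2NM) and W₂ = NM/(m·a_N^{1−a}). -/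
/-- Inequality (1.12) of Lemma 1.1:
`W₁ ξ^(2-a) - a_N/2 ≤ K(ξ) ξ² ≤ W₂ ξ^(2-a)` for all `ξ ≥ 0`. -/
theorem stmt7
    (N : ℕ) (hN : 1 ≤ N)
    (α : ℕ → ℝ) (hα0 : α 0 = 0) (hαmono : ∀ i < N, α i < α (i + 1))
    (aa : ℕ → ℝ) (ha0 : 0 < aa 0) (haN : 0 < aa N) (hann : ∀ j ≤ N, 0 ≤ aa j)
    (g : ℝ → ℝ)
    (hg : ∀ t : ℝ, 0 ≤ t → g t = ∑ j ∈ Finset.range (N + 1), aa j * t ^ α j)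
    (s : ℝ → ℝ) (hs : ∀ ξ : ℝ, 0 ≤ ξ → 0 ≤ s ξ ∧ s ξ * g (s ξ) = ξ)
    (K : ℝ → ℝ) (hK : ∀ ξ : ℝ, 0 ≤ ξ → K ξ = 1 / g (s ξ))
    (M : ℝ) (hMub : ∀ j ≤ N, aa j ≤ M) (hMmem : ∃ j ≤ N, aa j = M)
    (a : ℝ) (ha : a = α N / (α N + 1))
    (W₁ : ℝ) (hW₁ : W₁ = aa N ^ a / (2 * (N : ℝ) * M))
    (W₂ : ℝ) (hW₂ : W₂ = (N : ℝ) * M / (min (aa 0) (aa N) * aa N ^ (1 - a))) :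
    ∀ ξ : ℝ, 0 ≤ ξ →
      W₁ * ξ ^ (2 - a) - aa N / 2 ≤ K ξ * ξ ^ 2 ∧ K ξ * ξ ^ 2 ≤ W₂ * ξ ^ (2 - a) := by
  intro ξ hξ
  obtain ⟨hs0, hsξ⟩ := hs ξ hξ
  rw [hK ξ hξ]
  generalize s ξ = t at *
  have hα_le : ∀ n, ∀ i, i + n ≤ N → α i ≤ α (i + n) := by
    intro n
    induction n with
    | zero => intro i _; simp
    | succ k ih =>
      intro i hi
      have h1 := ih i (by omega)
      have h2 := hαmono (i + k) (by omega)
      have h3 : i + (k + 1) = i + k + 1 := by ring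
      rw [h3]; linarith
  have hα_nn : ∀ j ≤ N, 0 ≤ α j := by
    intro j hj
    have := hα_le j 0 (by omega)
    simpa [hα0] using this
  have hα_N : ∀ j ≤ N, α j ≤ α N := by
    intro j hj
    have := hα_le (N - j) j (by omega)
    rwa [Nat.add_sub_cancel' hj] at this
  have hαNn := hα_nn N le_rfl
  have hN' : (1 : ℝ) ≤ N := by exact_mod_cast hN
  have hbM : aa N ≤ M := hMub N le_rfl
  have hM : 0 < M := lt_of_lt_of_le haN hbM
  have hga : ∀ j ∈ Finset.range (N + 1), 0 ≤ aa j * t ^ α j := fun j hj =>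
    mul_nonneg (hann j (by simp at hj; omega)) (Real.rpow_nonneg hs0 _)
  have hg1 : aa 0 ≤ g t := by
    rw [hg t hs0]
    have := Finset.single_le_sum hga (Finset.mem_range.2 (Nat.succ_pos N))
    simpa [hα0] using this
  have hg2 : aa N * t ^ α N ≤ g t := by
    rw [hg t hs0]
    exact Finset.single_le_sum hga (Finset.mem_range.2 (Nat.lt_succ_self N))
  have hgpos : 0 < g t := lt_of_lt_of_le ha0 hg1
  have hKe : 1 / g t * ξ ^ 2 = t * ξ := by
    rw [← hsξ]; field_simp
  rw [hKe]
  have hB : ∀ B : ℝ, 0 ≤ B → (∀ j ≤ N, t ^ α j ≤ B) → g t ≤ 2 * N * M * B := by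
    intro B hB0 hB
    rw [hg t hs0]
    have h1 : ∑ j ∈ Finset.range (N + 1), aa j * t ^ α j
        ≤ ∑ j ∈ Finset.range (N + 1), M * B := by
      apply Finset.sum_le_sum
      intro j hj
      have hj' : j ≤ N := by simp at hj; omega
      exact mul_le_mul (hMub j hj') (hB j hj') (Real.rpow_nonneg hs0 _) hM.le
    rw [Finset.sum_const, Finset.card_range, nsmul_eq_mul] at h1
    push_cast at h1
    have : 0 ≤ M * B := by positivity
    nlinarith
  have ha0' : 0 ≤ a := by rw [ha]; positivity
  have h1a : 1 - a = 1 / (α N + 1) := by rw [ha]; field_simp; ring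
  have h1ap : 0 < 1 - a := by rw [h1a]; positivity
  have hsplit : ξ ^ (2 - a) = ξ * ξ ^ (1 - a) := by
    rw [show 2 - a = 1 + (1 - a) by ring, Real.rpow_add' hξ (by linarith), Real.rpow_one]
  have hpow : (t ^ (α N + 1)) ^ (1 - a) = t := by
    rw [← Real.rpow_mul hs0, h1a, mul_one_div_cancel (by positivity), Real.rpow_one]
  have htp : t ^ (α N + 1) = t * t ^ α N := by
    rw [Real.rpow_add' hs0 (by positivity), Real.rpow_one, mul_comm]
  have hcomb : ∀ x : ℝ, 0 < x → x ^ a * x ^ (1 - a) = x := by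
    intro x hx
    rw [← Real.rpow_add hx]; simp
  constructor
  · set P : ℝ := 2 * N * M with hP
    have hPpos : 0 < P := by positivity
    have hPb : 2 * aa N ≤ P := by nlinarith
    suffices h : aa N ^ a * ξ ^ (2 - a) ≤ P * (t * ξ + aa N / 2) by
      rw [hW₁, sub_le_iff_le_add, div_mul_eq_mul_div, div_le_iff₀ hPpos]
      linarith
    have hgle : t ≤ 1 → ξ ≤ t * P := by
      intro ht
      have := hB 1 zero_le_one (fun j hj => Real.rpow_le_one hs0 ht (hα_nn j hj))
      rw [← hsξ]
      exact mul_le_mul_of_nonneg_left (by linarith) hs0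
    rcases le_total (t * P) (aa N) with hc | hc
    · have ht1 : t ≤ 1 := by
        by_contra hh
        push Not at hh
        nlinarith
      have h1 : ξ ≤ aa N := (hgle ht1).trans hc
      have h2 : ξ ^ (2 - a) ≤ aa N ^ (2 - a) := Real.rpow_le_rpow hξ h1 (by linarith)
      have h3 : aa N ^ a * aa N ^ (2 - a) = aa N ^ 2 := by
        rw [← Real.rpow_add haN, show a + (2 - a) = 2 by ring]; norm_cast
      have h4 : aa N ^ a * ξ ^ (2 - a) ≤ aa N ^ 2 := by
        rw [← h3]
        exact mul_le_mul_of_nonneg_left h2 (Real.rpow_nonneg haN.le _)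
      have : 0 ≤ P * (t * ξ) := by positivity
      nlinarith
    · have key : aa N ^ a * ξ ^ (1 - a) ≤ P * t := by
        have htP : 0 < t * P := lt_of_lt_of_le haN hc
        rcases le_total t 1 with ht | ht
        · calc aa N ^ a * ξ ^ (1 - a) ≤ (t * P) ^ a * (t * P) ^ (1 - a) :=
              mul_le_mul (Real.rpow_le_rpow haN.le hc ha0')
                (Real.rpow_le_rpow hξ (hgle ht) h1ap.le) (Real.rpow_nonneg hξ _)
                (Real.rpow_nonneg htP.le _)
            _ = P * t := by rw [hcomb _ htP, mul_comm]
        · have h1 := hB (t ^ α N) (Real.rpow_nonneg hs0 _)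
            (fun j hj => Real.rpow_le_rpow_of_exponent_le ht (hα_N j hj))
          have h2 : ξ ≤ P * t ^ (α N + 1) := by
            rw [htp, ← hsξ]
            have := mul_le_mul_of_nonneg_left h1 hs0
            linarith
          calc aa N ^ a * ξ ^ (1 - a) ≤ P ^ a * (P * t ^ (α N + 1)) ^ (1 - a) :=
              mul_le_mul (Real.rpow_le_rpow haN.le (by linarith) ha0')
                (Real.rpow_le_rpow hξ h2 h1ap.le) (Real.rpow_nonneg hξ _)
                (Real.rpow_nonneg hPpos.le _)
            _ = P * t := by
              rw [Real.mul_rpow hPpos.le (Real.rpow_nonneg hs0 _), hpow, ← mul_assoc,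
                hcomb _ hPpos]
      rw [hsplit]
      have := mul_le_mul_of_nonneg_left key hξ
      have : 0 ≤ P * aa N := by positivity
      nlinarith
  · have h1 : aa N * t ^ (α N + 1) ≤ ξ := by
      rw [htp, ← hsξ]
      have := mul_le_mul_of_nonneg_left hg2 hs0
      linarith
    have h2 : aa N ^ (1 - a) * t ≤ ξ ^ (1 - a) := by
      have := Real.rpow_le_rpow (mul_nonneg haN.le (Real.rpow_nonneg hs0 _)) h1 h1ap.le
      rwa [Real.mul_rpow haN.le (Real.rpow_nonneg hs0 _), hpow] at this
    have hm : 0 < min (aa 0) (aa N) := lt_min ha0 haN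
    have hmN : min (aa 0) (aa N) ≤ N * M := by
      have := min_le_right (aa 0) (aa N)
      nlinarith
    have hbp : 0 < aa N ^ (1 - a) := Real.rpow_pos_of_pos haN _
    have hle : t ≤ W₂ * ξ ^ (1 - a) := by
      rw [hW₂, div_mul_eq_mul_div, le_div_iff₀ (by positivity)]
      have := mul_le_mul hmN h2 (by positivity) (by positivity)
      linarith
    rw [hsplit]
    have := mul_le_mul_of_nonneg_left hle hξ
    linarith
end

section
/- (Inequality (1.8).) The function K is differentiable on (0,∞) and satisfies −a·K(ξ) ≤ ξ·K'(ξ) ≤ 0 for every ξ > 0, where a = α_N/(α_N+1). Consequently, the function ξ ↦ ξ^a·K(ξ) is nondecreasing on (0,∞). -/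
/-- Inequality (1.8): `K` is differentiable on `(0,∞)` and
`-a K(ξ) ≤ ξ K'(ξ) ≤ 0`; consequently `ξ ↦ ξ^a K(ξ)` is nondecreasing on `(0,∞)`. -/
theorem stmt8
    (N : ℕ) (hN : 1 ≤ N)
    (α : ℕ → ℝ) (hα0 : α 0 = 0) (hαmono : ∀ i < N, α i < α (i + 1))
    (aa : ℕ → ℝ) (ha0 : 0 < aa 0) (haN : 0 < aa N) (hann : ∀ j ≤ N, 0 ≤ aa j)
    (g : ℝ → ℝ)
    (hg : ∀ t : ℝ, 0 ≤ t → g t = ∑ j ∈ Finset.range (N + 1), aa j * t ^ α j)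
    (s : ℝ → ℝ) (hs : ∀ ξ : ℝ, 0 ≤ ξ → 0 ≤ s ξ ∧ s ξ * g (s ξ) = ξ)
    (K : ℝ → ℝ) (hK : ∀ ξ : ℝ, 0 ≤ ξ → K ξ = 1 / g (s ξ))
    (a : ℝ) (ha : a = α N / (α N + 1)) :
    (∀ ξ : ℝ, 0 < ξ → DifferentiableAt ℝ K ξ) ∧
    (∀ ξ : ℝ, 0 < ξ → -(a * K ξ) ≤ ξ * deriv K ξ ∧ ξ * deriv K ξ ≤ 0) ∧
    MonotoneOn (fun ξ : ℝ => ξ ^ a * K ξ) (Set.Ioi 0) := by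
  have hαm : ∀ i j, i ≤ j → j ≤ N → α i ≤ α j := by
    intro i j hij
    induction j, hij using Nat.le_induction with
    | base => intro _; exact le_rfl
    | succ k hk ih =>
      intro hkN
      exact (ih (by omega)).trans (hαmono k (by omega)).le
  have hα_nn : ∀ j ≤ N, 0 ≤ α j := fun j hj => hα0 ▸ hαm 0 j (Nat.zero_le j) hj
  have hg_ge : ∀ t : ℝ, 0 ≤ t → aa 0 ≤ g t := by
    intro t ht
    rw [hg t ht]
    have h := Finset.single_le_sum (f := fun j => aa j * t ^ α j) (s := Finset.range (N + 1))
      (fun j hj => mul_nonneg (hann j (by have := Finset.mem_range.1 hj; omega))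
        (Real.rpow_nonneg ht _)) (Finset.mem_range.2 (Nat.succ_pos N))
    simpa [hα0] using h
  have hg_mono : ∀ u t : ℝ, 0 ≤ u → u ≤ t → g u ≤ g t := by
    intro u t hu hut
    rw [hg u hu, hg t (hu.trans hut)]
    refine Finset.sum_le_sum fun j hj => ?_
    have hjN : j ≤ N := by have := Finset.mem_range.1 hj; omega
    exact mul_le_mul_of_nonneg_left (Real.rpow_le_rpow hu hut (hα_nn j hjN)) (hann j hjN)
  have hF : ∀ u t : ℝ, 0 ≤ u → u ≤ t → aa 0 * (t - u) ≤ t * g t - u * g u := by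
    intro u t hu hut
    have h1 := hg_ge t (hu.trans hut)
    have h2 := hg_mono u t hu hut
    nlinarith [mul_le_mul_of_nonneg_left h2 hu, mul_le_mul_of_nonneg_right h1 (sub_nonneg.2 hut)]
  have hlip : ∀ x y : ℝ, 0 ≤ x → 0 ≤ y → aa 0 * |s x - s y| ≤ |x - y| := by
    intro x y hx hy
    obtain ⟨h1, h2⟩ := hs x hx
    obtain ⟨h3, h4⟩ := hs y hy
    rcases le_total (s x) (s y) with h | h
    · have := hF _ _ h1 h
      rw [h2, h4] at this
      rw [abs_sub_comm, abs_of_nonneg (sub_nonneg.2 h), abs_sub_comm]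
      exact this.trans (le_abs_self _)
    · have := hF _ _ h3 h
      rw [h2, h4] at this
      rw [abs_of_nonneg (sub_nonneg.2 h)]
      exact this.trans (le_abs_self _)
  have hcont : ∀ ξ : ℝ, 0 < ξ → ContinuousAt s ξ := by
    intro ξ hξ
    rw [ContinuousAt, tendsto_iff_dist_tendsto_zero]
    have hlim : Filter.Tendsto (fun x => |x - ξ| / aa 0) (nhds ξ) (nhds 0) := by
      have : ContinuousAt (fun x : ℝ => |x - ξ| / aa 0) ξ := by fun_prop
      simpa [ContinuousAt] using this
    refine squeeze_zero' (Filter.Eventually.of_forall fun _ => dist_nonneg) ?_ hlim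
    filter_upwards [lt_mem_nhds hξ] with x hx
    rw [Real.dist_eq, le_div_iff₀ ha0, mul_comm]
    exact hlip x ξ hx.le hξ.le
  have hspos : ∀ ξ : ℝ, 0 < ξ → 0 < s ξ := by
    intro ξ hξ
    obtain ⟨h1, h2⟩ := hs ξ hξ.le
    rcases h1.eq_or_lt with h | h
    · rw [← h] at h2; simp at h2; linarith
    · exact h
  have hαN : 0 ≤ α N := hα_nn N le_rfl
  have key : ∀ ξ : ℝ, 0 < ξ → ∃ K', HasDerivAt K K' ξ ∧ -(a * K ξ) ≤ ξ * K' ∧ ξ * K' ≤ 0 := by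
    intro ξ hξ
    set t := s ξ with ht
    have htp : 0 < t := hspos ξ hξ
    have hgp : 0 < g t := ha0.trans_le (hg_ge t htp.le)
    obtain ⟨D, hD⟩ : ∃ D, D = ∑ j ∈ Finset.range (N + 1), aa j * (α j * t ^ α j) := ⟨_, rfl⟩
    have hD0 : 0 ≤ D := by
      rw [hD]
      refine Finset.sum_nonneg fun j hj => ?_
      have hjN : j ≤ N := by have := Finset.mem_range.1 hj; omega
      exact mul_nonneg (hann j hjN) (mul_nonneg (hα_nn j hjN) (Real.rpow_nonneg htp.le _))
    have hD1 : D ≤ α N * g t := by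
      rw [hD, hg t htp.le, Finset.mul_sum]
      refine Finset.sum_le_sum fun j hj => ?_
      have hjN : j ≤ N := by have := Finset.mem_range.1 hj; omega
      have h1 := mul_nonneg (hann j hjN) (Real.rpow_nonneg htp.le (α j))
      nlinarith [mul_le_mul_of_nonneg_right (hαm j N hjN le_rfl) h1]
    have hgd : HasDerivAt g (D / t) t := by
      have h1 : HasDerivAt (fun x : ℝ => ∑ j ∈ Finset.range (N + 1), aa j * x ^ α j)
          (∑ j ∈ Finset.range (N + 1), aa j * (α j * t ^ (α j - 1))) t := by
        refine HasDerivAt.fun_sum fun j _ => ?_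
        exact (Real.hasDerivAt_rpow_const (Or.inl htp.ne')).const_mul _
      have h2 : D / t = ∑ j ∈ Finset.range (N + 1), aa j * (α j * t ^ (α j - 1)) := by
        rw [hD, Finset.sum_div]
        refine Finset.sum_congr rfl fun j _ => ?_
        rw [Real.rpow_sub_one htp.ne']
        ring
      rw [h2]
      refine h1.congr_of_eventuallyEq ?_
      filter_upwards [lt_mem_nhds htp] with x hx
      exact hg x hx.le
    have hFd : HasDerivAt (fun x => x * g x) (g t + D) t := by
      have := (hasDerivAt_id' t).mul hgd
      have h3 : g t + D = 1 * g t + t * (D / t) := by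
        rw [mul_div_cancel₀ D htp.ne', one_mul]
      rw [h3]
      exact this
    have hsd : HasDerivAt s (g t + D)⁻¹ ξ := by
      refine HasDerivAt.of_local_left_inverse (hcont ξ hξ) hFd (by positivity) ?_
      filter_upwards [lt_mem_nhds hξ] with x hx
      exact (hs x hx.le).2
    have hξt : t * g t = ξ := (hs ξ hξ.le).2
    have hKd := (hgd.comp ξ hsd).inv hgp.ne'
    have hKd' : HasDerivAt K (-(D / t * (g t + D)⁻¹) / g t ^ 2) ξ := by
      refine hKd.congr_of_eventuallyEq ?_
      filter_upwards [lt_mem_nhds hξ] with x hx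
      simp [hK x hx.le]
    have hval : ξ * (-(D / t * (g t + D)⁻¹) / g t ^ 2) = -(D / (g t + D) / g t) := by
      have : g t + D ≠ 0 := by positivity
      rw [← hξt]
      field_simp
    refine ⟨_, hKd', ?_, ?_⟩
    · rw [hval, hK ξ hξ.le, ha, ← ht, mul_one_div]
      refine neg_le_neg (div_le_div_of_nonneg_right ?_ hgp.le)
      rw [div_le_div_iff₀ (by positivity) (by positivity)]
      linarith
    · rw [hval]
      have : 0 ≤ D / (g t + D) / g t := by positivity
      linarith
  have hder : ∀ ξ : ℝ, 0 < ξ → ∃ d, HasDerivAt (fun ξ : ℝ => ξ ^ a * K ξ) d ξ ∧ 0 ≤ d := by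
    intro ξ hξ
    obtain ⟨K', h1, h2, h3⟩ := key ξ hξ
    refine ⟨_, (Real.hasDerivAt_rpow_const (Or.inl hξ.ne')).mul h1, ?_⟩
    have h4 : ξ ^ a = ξ ^ (a - 1) * ξ := by
      rw [Real.rpow_sub_one hξ.ne']; field_simp
    rw [h4]
    have h5 : 0 ≤ ξ ^ (a - 1) * (a * K ξ + ξ * K') :=
      mul_nonneg (Real.rpow_nonneg hξ.le _) (by linarith)
    linarith
  refine ⟨fun ξ hξ => ?_, fun ξ hξ => ?_, ?_⟩
  · obtain ⟨K', h1, _⟩ := key ξ hξ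
    exact h1.differentiableAt
  · obtain ⟨K', h1, h2⟩ := key ξ hξ
    rw [h1.deriv]; exact h2
  · refine monotoneOn_of_deriv_nonneg (convex_Ioi 0) ?_ ?_ ?_
    · intro x hx
      obtain ⟨d, h, _⟩ := hder x hx
      exact h.continuousAt.continuousWithinAt
    · intro x hx
      rw [interior_Ioi] at hx
      obtain ⟨d, h, _⟩ := hder x hx
      exact h.differentiableAt.differentiableWithinAt
    · intro x hx
      rw [interior_Ioi] at hx
      obtain ⟨d, h, h0⟩ := hder x hx
      rw [h.deriv]; exact h0
end

section
/- (Monotonicity, Lemma 1.2.) Let d ≥ 1 be an integer. For all vectors y, y' ∈ ℝ^d one has (K(|y|)·y − K(|y'|)·y')·(y − y') ≥ (1−a)·K(max{|y|,|y'|})·|y − y'|², where a = α_N/(α_N+1), |·| is the Euclidean norm and · denotes the Euclidean inner product. -/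
lemma aux_pow (p u v : ℝ) (hp : 0 ≤ p) (hv : 0 ≤ v) (hvu : v ≤ u) :
    u * u ^ p - v * v ^ p ≤ (p + 1) * u ^ p * (u - v) := by
  rcases hv.eq_or_lt with h | hv0
  · subst h
    have := Real.rpow_nonneg hvu p
    nlinarith [mul_nonneg hp (mul_nonneg this hvu)]
  have hu : 0 < u := lt_of_lt_of_le hv0 hvu
  have hb := one_add_mul_self_le_rpow_one_add (s := v / u - 1) (p := p + 1)
    (by have : 0 ≤ v / u := by positivity
        linarith) (by linarith)
  have e : 1 + (v / u - 1) = v / u := by ring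
  rw [e, Real.div_rpow hv hu.le, Real.rpow_add_one hv0.ne', Real.rpow_add_one hu.ne'] at hb
  have hup : 0 < u ^ p := Real.rpow_pos_of_pos hu p
  rw [le_div_iff₀ (by positivity)] at hb
  have e2 : (1 + (p + 1) * (v / u - 1)) * (u ^ p * u)
      = u ^ p * u + (p + 1) * (v - u) * u ^ p := by
    field_simp
  rw [e2] at hb
  nlinarith

lemma aux_key {E : Type*} [NormedAddCommGroup E] [InnerProductSpace ℝ E]
    (y z : E) (k l b : ℝ) (hk : 0 ≤ k) (hkl : k ≤ l) (hb1 : b ≤ 1)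
    (hyz : ‖z‖ ≤ ‖y‖) (h : b * k * (‖y‖ - ‖z‖) ≤ k * ‖y‖ - l * ‖z‖) :
    b * k * ‖y - z‖ ^ 2 ≤ (inner ℝ (k • y - l • z) (y - z) : ℝ) := by
  have hc := real_inner_le_norm y z
  rw [norm_sub_sq_real]
  simp only [inner_sub_left, inner_sub_right, real_inner_smul_left,
    real_inner_self_eq_norm_sq, real_inner_comm y z]
  have h1 := mul_le_mul_of_nonneg_right h (sub_nonneg.2 hyz)
  have hbk : b * k ≤ k := by nlinarith
  have h2 := mul_nonneg (by linarith : 0 ≤ k + l - 2 * (b * k)) (sub_nonneg.2 hc)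
  nlinarith

/-- Monotonicity, Lemma 1.2: for all `y, y' ∈ ℝ^d`,
`(K(|y|) y - K(|y'|) y') · (y - y') ≥ (1-a) K(max(|y|,|y'|)) |y - y'|²`. -/
theorem stmt9
    (N : ℕ) (hN : 1 ≤ N)
    (α : ℕ → ℝ) (hα0 : α 0 = 0) (hαmono : ∀ i < N, α i < α (i + 1))
    (aa : ℕ → ℝ) (ha0 : 0 < aa 0) (haN : 0 < aa N) (hann : ∀ j ≤ N, 0 ≤ aa j)
    (g : ℝ → ℝ)
    (hg : ∀ t : ℝ, 0 ≤ t → g t = ∑ j ∈ Finset.range (N + 1), aa j * t ^ α j)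
    (s : ℝ → ℝ) (hs : ∀ ξ : ℝ, 0 ≤ ξ → 0 ≤ s ξ ∧ s ξ * g (s ξ) = ξ)
    (K : ℝ → ℝ) (hK : ∀ ξ : ℝ, 0 ≤ ξ → K ξ = 1 / g (s ξ))
    (a : ℝ) (ha : a = α N / (α N + 1))
    (d : ℕ) (hd : 1 ≤ d) :
    ∀ y y' : EuclideanSpace ℝ (Fin d),
      (1 - a) * K (max ‖y‖ ‖y'‖) * ‖y - y'‖ ^ 2 ≤
        (inner ℝ (K ‖y‖ • y - K ‖y'‖ • y') (y - y') : ℝ) := by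
  have hmono : ∀ i j, i ≤ j → j ≤ N → α i ≤ α j := by
    intro i j hij
    induction j, hij using Nat.le_induction with
    | base => intro _; exact le_rfl
    | succ n hn ih => intro h; exact (ih (by omega)).trans (hαmono n (by omega)).le
  have hα : ∀ j ≤ N, 0 ≤ α j := fun j hj => hα0 ▸ hmono 0 j (Nat.zero_le _) hj
  have hgm : ∀ u v : ℝ, 0 ≤ v → v ≤ u → g v ≤ g u := by
    intro u v hv hvu
    rw [hg v hv, hg u (hv.trans hvu)]
    refine Finset.sum_le_sum fun j hj => ?_
    have hj' : j ≤ N := by simpa [Nat.lt_succ_iff] using hj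
    exact mul_le_mul_of_nonneg_left (Real.rpow_le_rpow hv hvu (hα j hj')) (hann j hj')
  have hgp : ∀ u : ℝ, 0 ≤ u → 0 < g u := by
    intro u hu
    rw [hg u hu]
    refine Finset.sum_pos' (fun j hj => ?_) ⟨0, by simp, by simpa [hα0] using ha0⟩
    have hj' : j ≤ N := by simpa [Nat.lt_succ_iff] using hj
    exact mul_nonneg (hann j hj') (Real.rpow_nonneg hu _)
  have hgb : ∀ u v : ℝ, 0 ≤ v → v ≤ u →
      u * g u - v * g v ≤ (α N + 1) * g u * (u - v) := by
    intro u v hv hvu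
    rw [hg v hv, hg u (hv.trans hvu), Finset.mul_sum, Finset.mul_sum, Finset.mul_sum,
      Finset.sum_mul, ← Finset.sum_sub_distrib]
    refine Finset.sum_le_sum fun j hj => ?_
    have hj' : j ≤ N := by simpa [Nat.lt_succ_iff] using hj
    have h1 := aux_pow (α j) u v (hα j hj') hv hvu
    have h2 : (α j + 1) * u ^ α j * (u - v) ≤ (α N + 1) * u ^ α j * (u - v) := by
      have := hmono j N hj' le_rfl
      have := Real.rpow_nonneg (hv.trans hvu) (α j)
      have := sub_nonneg.2 hvu
      gcongr
    have h3 := mul_le_mul_of_nonneg_left (h1.trans h2) (hann j hj')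
    linarith
  have hN0 := hα N le_rfl
  have hb : (1 - a) * (α N + 1) = 1 := by
    rw [ha]; field_simp; ring
  have hb1 : 1 - a ≤ 1 := by
    have : 0 ≤ a := by rw [ha]; positivity
    linarith
  have hb0 : 0 ≤ 1 - a := by nlinarith
  have main : ∀ y z : EuclideanSpace ℝ (Fin d), ‖z‖ ≤ ‖y‖ →
      (1 - a) * K ‖y‖ * ‖y - z‖ ^ 2 ≤ (inner ℝ (K ‖y‖ • y - K ‖z‖ • z) (y - z) : ℝ) := by
    intro y z hzy
    obtain ⟨hu, hue⟩ := hs ‖y‖ (norm_nonneg y)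
    obtain ⟨hv, hve⟩ := hs ‖z‖ (norm_nonneg z)
    have hky := hK ‖y‖ (norm_nonneg y)
    have hkz := hK ‖z‖ (norm_nonneg z)
    have hgu := hgp _ hu
    have hgv := hgp _ hv
    have hvu : s ‖z‖ ≤ s ‖y‖ := by
      by_contra! hlt
      have h1 := hgm _ _ hu hlt.le
      nlinarith
    have hgg := hgm _ _ hv hvu
    have hkey := hgb _ _ hv hvu
    refine aux_key y z _ _ _ (by rw [hky]; positivity) ?_ hb1 hzy ?_
    · rw [hky, hkz]; exact one_div_le_one_div_of_le hgv hgg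
    · have e1 : K ‖y‖ * ‖y‖ = s ‖y‖ := by
        rw [hky]; nth_rewrite 2 [← hue]; field_simp
      have e2 : K ‖z‖ * ‖z‖ = s ‖z‖ := by
        rw [hkz]; nth_rewrite 2 [← hve]; field_simp
      rw [e1, e2, hky]
      rw [hue, hve] at hkey
      have h3 := mul_le_mul_of_nonneg_left hkey hb0
      have h4 : (1 - a) * (‖y‖ - ‖z‖) ≤ (s ‖y‖ - s ‖z‖) * g (s ‖y‖) := by
        calc _ ≤ _ := h3
          _ = ((1 - a) * (α N + 1)) * ((s ‖y‖ - s ‖z‖) * g (s ‖y‖)) := by ring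
          _ = _ := by rw [hb, one_mul]
      have h5 := (div_le_iff₀ hgu).2 h4
      calc _ = _ := by ring
        _ ≤ _ := h5
  intro y z
  rcases le_total ‖z‖ ‖y‖ with h | h
  · rw [max_eq_left h]; exact main y z h
  · rw [max_eq_right h]
    have := main z y h
    rw [← neg_sub z y, ← neg_sub (K ‖z‖ • z), inner_neg_neg, norm_neg]
    exact this
end

section
/- (Inequality (1.18).) Define H(ξ) = ∫₀^{ξ²} K(√σ) dσ for ξ ≥ 0. Then for every ξ ≥ 0 one has K(ξ)·ξ² ≤ H(ξ) ≤ 2·K(ξ)·ξ². -/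
/-- Inequality (1.18): with `H(ξ) = ∫₀^(ξ²) K(√σ) dσ` one has
`K(ξ) ξ² ≤ H(ξ) ≤ 2 K(ξ) ξ²` for all `ξ ≥ 0`. -/
theorem stmt10
    (N : ℕ) (hN : 1 ≤ N)
    (α : ℕ → ℝ) (hα0 : α 0 = 0) (hαmono : ∀ i < N, α i < α (i + 1))
    (aa : ℕ → ℝ) (ha0 : 0 < aa 0) (haN : 0 < aa N) (hann : ∀ j ≤ N, 0 ≤ aa j)
    (g : ℝ → ℝ)
    (hg : ∀ t : ℝ, 0 ≤ t → g t = ∑ j ∈ Finset.range (N + 1), aa j * t ^ α j)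
    (s : ℝ → ℝ) (hs : ∀ ξ : ℝ, 0 ≤ ξ → 0 ≤ s ξ ∧ s ξ * g (s ξ) = ξ)
    (K : ℝ → ℝ) (hK : ∀ ξ : ℝ, 0 ≤ ξ → K ξ = 1 / g (s ξ))
    (H : ℝ → ℝ)
    (hH : ∀ ξ : ℝ, 0 ≤ ξ → H ξ = ∫ σ in (0:ℝ)..(ξ ^ 2), K (Real.sqrt σ)) :
    ∀ ξ : ℝ, 0 ≤ ξ → K ξ * ξ ^ 2 ≤ H ξ ∧ H ξ ≤ 2 * (K ξ * ξ ^ 2) := by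
  have hαnn : ∀ j ≤ N, 0 ≤ α j := by
    intro j
    induction j with
    | zero => intro _; rw [hα0]
    | succ k ih =>
      intro hk
      have h1 := ih (by omega)
      have h2 := hαmono k (by omega)
      linarith
  have gmono : ∀ x y : ℝ, 0 ≤ x → x ≤ y → g x ≤ g y := by
    intro x y hx hxy
    rw [hg x hx, hg y (hx.trans hxy)]
    apply Finset.sum_le_sum
    intro j hj
    have hj' : j ≤ N := by
      have := Finset.mem_range.mp hj
      omega
    exact mul_le_mul_of_nonneg_left (Real.rpow_le_rpow hx hxy (hαnn j hj')) (hann j hj')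
  have gpos : ∀ x : ℝ, 0 ≤ x → 0 < g x := by
    intro x hx
    rw [hg x hx]
    apply Finset.sum_pos'
    · intro j hj
      have hj' : j ≤ N := by
        have := Finset.mem_range.mp hj
        omega
      exact mul_nonneg (hann j hj') (Real.rpow_nonneg hx _)
    · refine ⟨0, by simp, ?_⟩
      rw [hα0, Real.rpow_zero, mul_one]
      exact ha0
  have smono : ∀ x y : ℝ, 0 ≤ x → x ≤ y → s x ≤ s y := by
    intro x y hx hxy
    by_contra hlt
    push Not at hlt
    obtain ⟨h1, h2⟩ := hs x hx
    obtain ⟨h3, h4⟩ := hs y (hx.trans hxy)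
    have h5 := gmono _ _ h3 hlt.le
    have h6 := gpos _ h1
    have h7 : s y * g (s y) ≤ s y * g (s x) := mul_le_mul_of_nonneg_left h5 h3
    have h8 : s y * g (s x) < s x * g (s x) := mul_lt_mul_of_pos_right hlt h6
    linarith
  have Kanti : ∀ x y : ℝ, 0 ≤ x → x ≤ y → K y ≤ K x := by
    intro x y hx hxy
    rw [hK x hx, hK y (hx.trans hxy)]
    exact one_div_le_one_div_of_le (gpos _ (hs x hx).1)
      (gmono _ _ (hs x hx).1 (smono x y hx hxy))
  have Kmul : ∀ x : ℝ, 0 ≤ x → K x * x = s x := by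
    intro x hx
    have h1 := gpos _ (hs x hx).1
    have h2 := (hs x hx).2
    rw [hK x hx, one_div, inv_mul_eq_iff_eq_mul₀ h1.ne']
    linarith
  have hanti : Antitone (fun σ : ℝ => K (Real.sqrt σ)) := fun x y hxy =>
    Kanti _ _ (Real.sqrt_nonneg _) (Real.sqrt_le_sqrt hxy)
  intro ξ hξ
  have hint : IntervalIntegrable (fun σ : ℝ => K (Real.sqrt σ)) MeasureTheory.volume 0 (ξ ^ 2) :=
    hanti.intervalIntegrable
  have hle : ∀ σ ≤ ξ ^ 2, Real.sqrt σ ≤ ξ := fun σ h => Real.sqrt_le_iff.mpr ⟨hξ, h⟩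
  rw [hH ξ hξ]
  constructor
  · have h := intervalIntegral.integral_mono_on (sq_nonneg ξ)
      (intervalIntegrable_const (c := K ξ)) hint
      (fun σ hσ => Kanti _ _ (Real.sqrt_nonneg σ) (hle σ hσ.2))
    rw [intervalIntegral.integral_const] at h
    simp only [smul_eq_mul, sub_zero] at h
    linarith
  · have hi : IntervalIntegrable (fun σ : ℝ => s ξ * σ ^ (-(1/2) : ℝ))
        MeasureTheory.volume 0 (ξ ^ 2) :=
      (intervalIntegral.intervalIntegrable_rpow' (by norm_num)).const_mul _
    have h := intervalIntegral.integral_mono_on_of_le_Ioo (sq_nonneg ξ) hint hi (by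
      intro σ hσ
      have hp : 0 < Real.sqrt σ := Real.sqrt_pos.mpr hσ.1
      rw [Real.rpow_neg hσ.1.le, ← Real.sqrt_eq_rpow, ← div_eq_mul_inv, le_div_iff₀ hp,
        Kmul _ hp.le]
      exact smono _ _ hp.le (hle σ hσ.2.le))
    rw [intervalIntegral.integral_const_mul, integral_rpow (Or.inl (by norm_num))] at h
    have e : (-(1/2) + 1 : ℝ) = 1/2 := by norm_num
    rw [e, ← Real.sqrt_eq_rpow, ← Real.sqrt_eq_rpow, Real.sqrt_sq hξ, Real.sqrt_zero] at h
    have := Kmul ξ hξ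
    calc _ ≤ _ := h
      _ = 2 * (K ξ * ξ ^ 2) := by rw [← this]; ring
end

section
/- (Inequality (1.19).) Define H(ξ) = ∫₀^{ξ²} K(√σ) dσ for ξ ≥ 0. Then for every ξ ≥ 0 one has W₁·ξ^{2−a} − a_N/2 ≤ H(ξ) ≤ 2·W₂·ξ^{2−a}, where a = α_N/(α_N+1), W₁ = a_N^a/(2NM) and W₂ = NM/(m·a_N^{1−a}). -/
set_option maxHeartbeats 4000000 in
/-- Inequality (1.19): with `H(ξ) = ∫₀^(ξ²) K(√σ) dσ` one has
`W₁ ξ^(2-a) - a_N/2 ≤ H(ξ) ≤ 2 W₂ ξ^(2-a)` for all `ξ ≥ 0`. -/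
theorem stmt11
    (N : ℕ) (hN : 1 ≤ N)
    (α : ℕ → ℝ) (hα0 : α 0 = 0) (hαmono : ∀ i < N, α i < α (i + 1))
    (aa : ℕ → ℝ) (ha0 : 0 < aa 0) (haN : 0 < aa N) (hann : ∀ j ≤ N, 0 ≤ aa j)
    (g : ℝ → ℝ)
    (hg : ∀ t : ℝ, 0 ≤ t → g t = ∑ j ∈ Finset.range (N + 1), aa j * t ^ α j)
    (s : ℝ → ℝ) (hs : ∀ ξ : ℝ, 0 ≤ ξ → 0 ≤ s ξ ∧ s ξ * g (s ξ) = ξ)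
    (K : ℝ → ℝ) (hK : ∀ ξ : ℝ, 0 ≤ ξ → K ξ = 1 / g (s ξ))
    (M : ℝ) (hMub : ∀ j ≤ N, aa j ≤ M) (hMmem : ∃ j ≤ N, aa j = M)
    (a : ℝ) (ha : a = α N / (α N + 1))
    (W₁ : ℝ) (hW₁ : W₁ = aa N ^ a / (2 * (N : ℝ) * M))
    (W₂ : ℝ) (hW₂ : W₂ = (N : ℝ) * M / (min (aa 0) (aa N) * aa N ^ (1 - a)))
    (H : ℝ → ℝ)
    (hH : ∀ ξ : ℝ, 0 ≤ ξ → H ξ = ∫ σ in (0:ℝ)..(ξ ^ 2), K (Real.sqrt σ)) :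
    ∀ ξ : ℝ, 0 ≤ ξ →
      W₁ * ξ ^ (2 - a) - aa N / 2 ≤ H ξ ∧ H ξ ≤ 2 * W₂ * ξ ^ (2 - a) := by
  have hαpos : ∀ j ≤ N, 0 ≤ α j ∧ α j ≤ α N := by
    have mono : ∀ k j, j + k ≤ N → α j ≤ α (j + k) := by
      intro k j
      induction k with
      | zero => intro _; simp
      | succ k ih =>
        intro h
        have h1 := ih (by omega)
        have h2 := hαmono (j + k) (by omega)
        rw [← add_assoc]
        linarith
    intro j hj
    constructor
    · have := mono j 0 (by omega)
      rw [hα0, zero_add] at this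
      exact this
    · have := mono (N - j) j (by omega)
      rwa [Nat.add_sub_cancel' hj] at this
  have hA : 0 < α N := by
    have h1 := hαmono 0 (by omega)
    have h2 := (hαpos 1 hN).2
    rw [hα0] at h1
    simp only [zero_add] at h1
    linarith
  have ha_pos : 0 < a := by rw [ha]; positivity
  have ha_lt : a < 1 := by rw [ha, div_lt_one (by linarith)]; linarith
  have hM : aa N ≤ M := hMub N le_rfl
  have hMpos : 0 < M := lt_of_lt_of_le haN hM
  have hN1 : (1:ℝ) ≤ N := by exact_mod_cast hN
  have gmono : ∀ x y : ℝ, 0 ≤ x → x ≤ y → g x ≤ g y := by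
    intro x y hx hxy
    rw [hg x hx, hg y (hx.trans hxy)]
    apply Finset.sum_le_sum
    intro j hj
    have hj' : j ≤ N := by simp at hj; omega
    exact mul_le_mul_of_nonneg_left (Real.rpow_le_rpow hx hxy (hαpos j hj').1) (hann j hj')
  have gterm : ∀ x : ℝ, 0 ≤ x → ∀ j ≤ N, aa j * x ^ α j ≤ g x := by
    intro x hx j hj
    rw [hg x hx]
    exact Finset.single_le_sum (f := fun j => aa j * x ^ α j)
      (fun i hi => mul_nonneg (hann i (by simp at hi; omega)) (Real.rpow_nonneg hx _))
      (by simp; omega)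
  have gpos : ∀ x : ℝ, 0 ≤ x → 0 < g x := by
    intro x hx
    have := gterm x hx 0 (by omega)
    rw [hα0, Real.rpow_zero] at this
    linarith
  have gub : ∀ x B : ℝ, 0 ≤ x → (∀ j ≤ N, x ^ α j ≤ B) → g x ≤ 2 * N * M * B := by
    intro x B hx hB
    have hB0 : 0 ≤ B := (Real.rpow_nonneg hx _).trans (hB 0 (by omega))
    have h1 : g x ≤ ∑ j ∈ Finset.range (N + 1), M * B := by
      rw [hg x hx]
      apply Finset.sum_le_sum
      intro j hj
      have hj' : j ≤ N := by simp at hj; omega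
      exact mul_le_mul (hMub j hj') (hB j hj') (Real.rpow_nonneg hx _) hMpos.le
    simp only [Finset.sum_const, Finset.card_range, nsmul_eq_mul] at h1
    push_cast at h1
    have : 0 ≤ M * B := by positivity
    nlinarith
  have smono : ∀ x y : ℝ, 0 ≤ x → x ≤ y → s x ≤ s y := by
    intro x y hx hxy
    by_contra! h
    obtain ⟨h1, h2⟩ := hs x hx
    obtain ⟨h3, h4⟩ := hs y (hx.trans hxy)
    have h5 := gmono _ _ h3 h.le
    have h6 := gpos _ h3
    nlinarith
  have Kanti : ∀ x y : ℝ, 0 ≤ x → x ≤ y → K y ≤ K x := by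
    intro x y hx hxy
    rw [hK x hx, hK y (hx.trans hxy)]
    exact one_div_le_one_div_of_le (gpos _ (hs x hx).1)
      (gmono _ _ (hs x hx).1 (smono x y hx hxy))
  intro ξ hξ
  have hξ2 : 0 ≤ ξ ^ 2 := by positivity
  have hint : IntervalIntegrable (fun σ => K (Real.sqrt σ)) MeasureTheory.volume 0 (ξ ^ 2) := by
    apply AntitoneOn.intervalIntegrable
    intro x _ y _ hxy
    exact Kanti _ _ (Real.sqrt_nonneg x) (Real.sqrt_le_sqrt hxy)
  have hlow : ξ ^ 2 * K ξ ≤ H ξ := by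
    rw [hH ξ hξ]
    have : ∫ σ in (0:ℝ)..(ξ ^ 2), K ξ ≤ ∫ σ in (0:ℝ)..(ξ ^ 2), K (Real.sqrt σ) := by
      apply intervalIntegral.integral_mono_on hξ2 (by simp) hint
      intro x hx
      apply Kanti _ _ (Real.sqrt_nonneg x)
      exact Real.sqrt_le_iff.mpr ⟨hξ, hx.2⟩
    simpa using this
  rcases hξ.eq_or_lt with h0 | hpos
  · subst h0
    have : H 0 = 0 := by rw [hH 0 le_rfl]; simp
    rw [this, Real.zero_rpow (by linarith)]
    constructor <;> linarith
  have sfacts : ∀ r : ℝ, 0 < r → 0 < s r := by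
    intro r hr
    obtain ⟨h1, h2⟩ := hs r hr.le
    rcases h1.eq_or_lt with h | h
    · rw [← h] at h2; linarith
    · exact h
  have haA : (α N + 1) * a = α N := by rw [ha]; field_simp
  have haA' : (α N + 1) * (1 - a) = 1 := by linarith
  -- a_N s^(A+1) ≤ r
  have key : ∀ r : ℝ, 0 < r → aa N * s r ^ (α N + 1) ≤ r := by
    intro r hr
    have h1 := gterm (s r) (sfacts r hr).le N le_rfl
    have h2 := (hs r hr.le).2
    rw [Real.rpow_add_one (sfacts r hr).ne']
    have := sfacts r hr
    nlinarith
  constructor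
  · have hS := sfacts ξ hpos
    obtain ⟨-, hSG⟩ := hs ξ hξ
    have hkey := key ξ hpos
    have hG := gpos (s ξ) hS.le
    have hGt := gub (s ξ)
    have hKe : ξ ^ 2 * K ξ = ξ * s ξ := by
      rw [hK ξ hξ]
      field_simp
      linarith
    rw [hKe] at hlow
    refine le_trans ?_ hlow
    generalize s ξ = S at *
    generalize g S = G at *
    have hP : 2 * aa N ≤ 2 * N * M := by nlinarith
    have hPpos : 0 < 2 * N * M := by linarith
    generalize 2 * N * M = P at *
    have hW : W₁ * ξ ^ (2 - a) = ξ ^ 2 * (aa N / ξ) ^ a / P := by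
      rw [hW₁, Real.div_rpow haN.le hξ, Real.rpow_sub hpos, Real.rpow_two]
      ring
    rw [hW, sub_le_iff_le_add, div_le_iff₀ hPpos]
    have hu0 : 0 ≤ (aa N / ξ) ^ a := by positivity
    rcases le_or_gt 1 S with h1 | h1
    · have hu : (aa N / ξ) ^ a * S ^ α N ≤ 1 := by
        have e : S ^ α N = (S ^ (α N + 1)) ^ a := by rw [← Real.rpow_mul hS.le, haA]
        rw [e, ← Real.mul_rpow (by positivity) (by positivity)]
        apply Real.rpow_le_one (by positivity) _ ha_pos.le
        rw [div_mul_eq_mul_div, div_le_one hpos]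
        exact hkey
      have hGP := hGt (S ^ α N) hS.le
        (fun j hj => Real.rpow_le_rpow_of_exponent_le h1 (hαpos j hj).2)
      generalize (aa N / ξ) ^ a = u at *
      generalize S ^ α N = T at *
      have h2 : G * u ≤ P := by nlinarith
      have h3 : ξ ^ 2 * u = ξ * S * (G * u) := by rw [← hSG]; ring
      rw [h3]
      have h4 : ξ * S * (G * u) ≤ ξ * S * P := mul_le_mul_of_nonneg_left h2 (by positivity)
      have : 0 < aa N * P := by positivity
      nlinarith
    · have hGP := hGt 1 hS.le
        (fun j hj => Real.rpow_le_one hS.le h1.le (hαpos j hj).1)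
      rw [mul_one] at hGP
      have hu : (aa N / ξ) ^ a ≤ a * (aa N / ξ) + (1 - a) := by
        have := Real.geom_mean_le_arith_mean2_weighted ha_pos.le (by linarith : 0 ≤ 1 - a)
          (by positivity : 0 ≤ aa N / ξ) zero_le_one (by ring)
        simpa using this
      have h2 : ξ ^ 2 * (aa N / ξ) ^ a ≤ a * (ξ * aa N) + (1 - a) * ξ ^ 2 := by
        calc _ ≤ ξ ^ 2 * (a * (aa N / ξ) + (1 - a)) := mul_le_mul_of_nonneg_left hu hξ2
          _ = _ := by field_simp
      refine h2.trans ?_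
      have e1 : ξ * aa N ≤ (ξ * S + aa N / 2) * P := by
        rcases le_or_gt G (aa N) with h | h
        · have : ξ ≤ aa N := by nlinarith
          have h5 : 0 ≤ ξ * S * P := by positivity
          nlinarith
        · have h6 : (ξ * S + aa N / 2) * G ≤ (ξ * S + aa N / 2) * P :=
            mul_le_mul_of_nonneg_left hGP (by positivity)
          have h7 : (ξ * S + aa N / 2) * G = ξ ^ 2 + aa N * G / 2 := by rw [← hSG]; ring
          nlinarith [sq_nonneg (ξ - aa N / 2), mul_pos haN haN]
      have e2 : ξ ^ 2 ≤ (ξ * S + aa N / 2) * P := by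
        have h6 : ξ * S * G ≤ ξ * S * P := mul_le_mul_of_nonneg_left hGP (by positivity)
        have h7 : ξ * S * G = ξ ^ 2 := by rw [← hSG]; ring
        have : 0 < aa N * P := by positivity
        nlinarith
      have := mul_le_mul_of_nonneg_left e1 ha_pos.le
      have := mul_le_mul_of_nonneg_left e2 (by linarith : 0 ≤ 1 - a)
      linarith
  · have hKub : ∀ σ : ℝ, 0 < σ → K (Real.sqrt σ) ≤ (aa N ^ (1 - a))⁻¹ * σ ^ (-(a / 2)) := by
      intro σ hσ
      have hr : 0 < Real.sqrt σ := Real.sqrt_pos.mpr hσ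
      have e : σ ^ (-(a / 2)) = Real.sqrt σ ^ (-a) := by
        rw [Real.sqrt_eq_rpow, ← Real.rpow_mul hσ.le]; congr 1; ring
      rw [e]
      generalize Real.sqrt σ = r at *
      have h1 := key r hr
      have hS := sfacts r hr
      have h2 := (hs r hr.le).2
      have hG := gpos (s r) hS.le
      have h3 : aa N ^ (1 - a) * s r ≤ r ^ (1 - a) := by
        have := Real.rpow_le_rpow (by positivity) h1 (by linarith : 0 ≤ 1 - a)
        rwa [Real.mul_rpow haN.le (by positivity), ← Real.rpow_mul hS.le, haA',
          Real.rpow_one] at this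
      have h4 : r ^ (-a) = r ^ (1 - a) / r := by
        rw [← Real.rpow_sub_one hr.ne']; congr 1; ring
      have h5 : K r = s r / r := by
        rw [hK r hr.le, div_eq_div_iff hG.ne' hr.ne']; linarith
      rw [h4, h5, inv_mul_eq_div, div_div, mul_comm r, ← div_div]
      apply div_le_div_of_nonneg_right _ hr.le
      rw [le_div_iff₀ (by positivity)]
      linarith
    have hup : H ξ ≤ ∫ σ in (0:ℝ)..(ξ ^ 2), (aa N ^ (1 - a))⁻¹ * σ ^ (-(a / 2)) := by
      rw [hH ξ hξ]
      apply intervalIntegral.integral_mono_on_of_le_Ioo hξ2 hint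
      · exact (intervalIntegral.intervalIntegrable_rpow' (by linarith)).const_mul _
      · intro x hx
        exact hKub x hx.1
    rw [intervalIntegral.integral_const_mul, integral_rpow (Or.inl (by linarith)),
      Real.zero_rpow (by linarith), sub_zero] at hup
    have e : (ξ ^ 2) ^ (-(a / 2) + 1) = ξ ^ (2 - a) := by
      rw [← Real.rpow_two, ← Real.rpow_mul hξ]; congr 1; ring
    rw [e] at hup
    refine hup.trans ?_
    have hm : 0 < min (aa 0) (aa N) := lt_min ha0 haN
    have hc : 0 < aa N ^ (1 - a) := by positivity
    have hX : 0 ≤ ξ ^ (2 - a) := by positivity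
    have hR : 1 ≤ N * M / min (aa 0) (aa N) := by
      rw [one_le_div hm]
      have := min_le_right (aa 0) (aa N)
      nlinarith
    have hW : 2 * W₂ * ξ ^ (2 - a) = (aa N ^ (1 - a))⁻¹ *
        (ξ ^ (2 - a) * (2 * (N * M / min (aa 0) (aa N)))) := by
      rw [hW₂]; field_simp
    rw [hW]
    apply mul_le_mul_of_nonneg_left _ (by positivity)
    rw [div_le_iff₀ (by linarith), mul_assoc]
    apply le_mul_of_one_le_right hX
    nlinarith
end

section
/- (Lemma A.1(i).) Let φ : [0,∞) → [0,∞) be a continuous, strictly increasing bijection of [0,∞) onto itself. Let y : [0,∞) → [0,∞) be continuous on [0,∞) and differentiable on (0,∞), and let h, f : [0,∞) → ℝ be continuous with h(t) > 0 and f(t) ≥ 0 for all t, such that y'(t) ≤ −h(t)·φ^{−1}(y(t)) + f(t) for all t > 0. If M : [0,∞) → ℝ is an increasing continuous function with M(t) ≥ f(t)/h(t) for all t ≥ 0, then y(t) ≤ y(0) + φ(M(t)) for all t ≥ 0. -/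
/-- Lemma A.1(i): if `y' ≤ -h·φ⁻¹(y) + f` on `(0,∞)` and `M` is an increasing
continuous function with `M ≥ f/h`, then `y(t) ≤ y(0) + φ(M(t))` for all `t ≥ 0`. -/
theorem stmt14 (φ ψ y h f M : ℝ → ℝ)
    (hφc : ContinuousOn φ (Set.Ici 0))
    (hφmono : StrictMonoOn φ (Set.Ici 0))
    (hφbij : Set.BijOn φ (Set.Ici 0) (Set.Ici 0))
    (hψ : Set.InvOn ψ φ (Set.Ici 0) (Set.Ici 0))
    (hyc : ContinuousOn y (Set.Ici 0))
    (hyd : ∀ t : ℝ, 0 < t → DifferentiableAt ℝ y t)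
    (hy0 : ∀ t : ℝ, 0 ≤ t → 0 ≤ y t)
    (hhc : ContinuousOn h (Set.Ici 0)) (hhpos : ∀ t : ℝ, 0 ≤ t → 0 < h t)
    (hfc : ContinuousOn f (Set.Ici 0)) (hfnn : ∀ t : ℝ, 0 ≤ t → 0 ≤ f t)
    (hode : ∀ t : ℝ, 0 < t → deriv y t ≤ -h t * ψ (y t) + f t)
    (hMc : ContinuousOn M (Set.Ici 0)) (hMmono : MonotoneOn M (Set.Ici 0))
    (hM : ∀ t : ℝ, 0 ≤ t → f t / h t ≤ M t) :
    ∀ t : ℝ, 0 ≤ t → y t ≤ y 0 + φ (M t) := by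
  intro T hT
  have hMT : ∀ t : ℝ, 0 ≤ t → 0 ≤ M t := fun t ht =>
    le_trans (div_nonneg (hfnn t ht) (hhpos t ht).le) (hM t ht)
  have hφM : 0 ≤ φ (M T) := hφbij.mapsTo (hMT T hT)
  by_contra! hcon
  have hyT : ContinuousOn y (Set.Icc 0 T) := hyc.mono Set.Icc_subset_Ici_self
  have hcl : IsClosed (Set.Icc 0 T ∩ y ⁻¹' Set.Iic (y 0 + φ (M T))) :=
    hyT.preimage_isClosed_of_isClosed isClosed_Icc isClosed_Iic
  have hcomp : IsCompact (Set.Icc 0 T ∩ y ⁻¹' Set.Iic (y 0 + φ (M T))) :=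
    isCompact_Icc.of_isClosed_subset hcl Set.inter_subset_left
  obtain ⟨a, ⟨⟨ha0, haT⟩, hya⟩, hub⟩ := hcomp.exists_isGreatest
    ⟨0, ⟨le_refl _, hT⟩, by simpa using hφM⟩
  simp only [Set.mem_preimage, Set.mem_Iic] at hya
  have hanti : AntitoneOn y (Set.Icc a T) := by
    refine antitoneOn_of_deriv_nonpos (convex_Icc a T)
      (hyc.mono fun s hs => ha0.trans hs.1) ?_ ?_
    · rw [interior_Icc]
      exact fun s hs => (hyd s (ha0.trans_lt hs.1)).differentiableWithinAt
    · rw [interior_Icc]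
      intro s hs
      have hs0 : 0 < s := ha0.trans_lt hs.1
      have hys : y 0 + φ (M T) < y s := by
        by_contra! hle
        exact absurd (hub ⟨⟨hs0.le, hs.2.le⟩, hle⟩) (not_le.mpr hs.1)
      obtain ⟨x, hx, hxy⟩ := hφbij.surjOn (hy0 s hs0.le)
      have hψx : ψ (y s) = x := by rw [← hxy]; exact hψ.1 hx
      have h1 : M T < x := by
        rw [← hφmono.lt_iff_lt (hMT T hT) hx, hxy]
        linarith [hy0 0 le_rfl]
      have h2 : M s ≤ M T := hMmono hs0.le hT hs.2.le
      have h3 := hM s hs0.le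
      have hh := hhpos s hs0.le
      have h4 : f s ≤ x * h s := by
        rw [← div_le_iff₀ hh]; linarith
      have h5 := hode s hs0
      rw [hψx] at h5
      linarith
  have := hanti ⟨le_rfl, haT⟩ ⟨haT, le_rfl⟩ haT
  linarith
end

section
/- (Lemma A.1(ii).) Let φ : [0,∞) → [0,∞) be a continuous, strictly increasing bijection of [0,∞) onto itself. Let y : [0,∞) → [0,∞) be continuous on [0,∞) and differentiable on (0,∞), and let h, f : [0,∞) → ℝ be continuous with h(t) > 0 and f(t) ≥ 0 for all t, such that y'(t) ≤ −h(t)·φ^{−1}(y(t)) + f(t) for all t > 0. If ∫₀^∞ h(τ) dτ = ∞ and L := limsup_{t→∞} f(t)/h(t) is finite, then limsup_{t→∞} y(t) ≤ φ(L). -/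
open Filter
open scoped Topology

/-- Lemma A.1(ii): if `y' ≤ -h·φ⁻¹(y) + f` on `(0,∞)`, `∫₀^∞ h = ∞`, and
`L = limsup_{t→∞} f(t)/h(t)` is finite, then `limsup_{t→∞} y(t) ≤ φ(L)`. -/
theorem stmt15 (φ ψ y h f : ℝ → ℝ)
    (hφc : ContinuousOn φ (Set.Ici 0))
    (hφmono : StrictMonoOn φ (Set.Ici 0))
    (hφbij : Set.BijOn φ (Set.Ici 0) (Set.Ici 0))
    (hψ : Set.InvOn ψ φ (Set.Ici 0) (Set.Ici 0))
    (hyc : ContinuousOn y (Set.Ici 0))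
    (hyd : ∀ t : ℝ, 0 < t → DifferentiableAt ℝ y t)
    (hy0 : ∀ t : ℝ, 0 ≤ t → 0 ≤ y t)
    (hhc : ContinuousOn h (Set.Ici 0)) (hhpos : ∀ t : ℝ, 0 ≤ t → 0 < h t)
    (hfc : ContinuousOn f (Set.Ici 0)) (hfnn : ∀ t : ℝ, 0 ≤ t → 0 ≤ f t)
    (hode : ∀ t : ℝ, 0 < t → deriv y t ≤ -h t * ψ (y t) + f t)
    (hint : Tendsto (fun t : ℝ => ∫ τ in (0:ℝ)..t, h τ) atTop atTop)
    (L : ℝ)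
    (hL : limsup (fun t : ℝ => ((f t / h t : ℝ) : EReal)) atTop = (L : EReal)) :
    limsup (fun t : ℝ => ((y t : ℝ) : EReal)) atTop ≤ ((φ L : ℝ) : EReal) := by
  have hLr : ∀ a : ℝ, L < a → ∀ᶠ t in atTop, f t / h t < a := by
    intro a ha
    have h1 : limsup (fun t : ℝ => ((f t / h t : ℝ) : EReal)) atTop < (a : EReal) := by
      rw [hL]; exact_mod_cast ha
    filter_upwards [eventually_lt_of_limsup_lt h1] with t ht
    exact_mod_cast ht
  have hL0 : 0 ≤ L := by
    by_contra hneg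
    push Not at hneg
    obtain ⟨t, ht, ht0⟩ := ((hLr 0 hneg).and (eventually_ge_atTop 0)).exists
    exact absurd ht (not_lt.mpr (div_nonneg (hfnn t ht0) (hhpos t ht0).le))
  refine EReal.le_of_forall_lt_iff_le.mp ?_
  intro c hc
  have hc' : φ L < c := by exact_mod_cast hc
  have hc0 : 0 ≤ c := le_trans (hφbij.mapsTo hL0) hc'.le
  obtain ⟨M, hM0, hM⟩ := hφbij.surjOn hc0
  have hLM : L < M := by
    rw [← hM] at hc'
    exact (hφmono.lt_iff_lt hL0 hM0).mp hc'
  have hψM : ∀ x, c ≤ x → M ≤ ψ x := by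
    intro x hx
    obtain ⟨N, hN0, hN⟩ := hφbij.surjOn (show x ∈ Set.Ici (0:ℝ) from le_trans hc0 hx)
    rw [← hN, hψ.1 hN0]
    rw [← hM, ← hN] at hx
    exact (hφmono.le_iff_le hM0 hN0).mp hx
  obtain ⟨δ, hδ, hδM⟩ : ∃ δ : ℝ, 0 < δ ∧ L < M - δ := ⟨(M - L) / 2, by linarith, by linarith⟩
  obtain ⟨T, hT⟩ := eventually_atTop.mp ((hLr _ hδM).and (eventually_gt_atTop 0))
  have hT0 : 0 < T := (hT T le_rfl).2
  have key : ∀ t, T ≤ t → c ≤ y t → deriv y t ≤ -(δ * h t) := by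
    intro t ht hyt
    obtain ⟨h1, h2⟩ := hT t ht
    have hp := hhpos t h2.le
    rw [div_lt_iff₀ hp] at h1
    have h3 := hode t h2
    have h4 := mul_le_mul_of_nonneg_left (hψM _ hyt) hp.le
    nlinarith
  have step1 : ∃ t1, T ≤ t1 ∧ y t1 ≤ c := by
    by_contra hcon
    push Not at hcon
    have hd : ∀ t, 0 < t → HasDerivAt (fun t => y t + δ * ∫ τ in (0:ℝ)..t, h τ)
        (deriv y t + δ * h t) t := by
      intro t ht
      refine (hyd t ht).hasDerivAt.add (HasDerivAt.const_mul δ ?_)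
      refine intervalIntegral.integral_hasDerivAt_right ?_ ?_ ?_
      · apply ContinuousOn.intervalIntegrable
        rw [Set.uIcc_of_le ht.le]
        exact hhc.mono Set.Icc_subset_Ici_self
      · exact ContinuousOn.stronglyMeasurableAtFilter isOpen_Ioi
          (hhc.mono Set.Ioi_subset_Ici_self) t ht
      · exact hhc.continuousAt (Ici_mem_nhds ht)
    have anti : AntitoneOn (fun t => y t + δ * ∫ τ in (0:ℝ)..t, h τ) (Set.Ici T) := by
      apply antitoneOn_of_deriv_nonpos (convex_Ici T)
      · intro t ht
        exact (hd t (lt_of_lt_of_le hT0 ht)).continuousAt.continuousWithinAt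
      · intro t ht
        rw [interior_Ici] at ht
        exact (hd t (hT0.trans ht)).differentiableAt.differentiableWithinAt
      · intro t ht
        rw [interior_Ici] at ht
        rw [(hd t (hT0.trans ht)).deriv]
        have := key t (le_of_lt ht) (hcon t (le_of_lt ht)).le
        linarith
    obtain ⟨t, ht, htT⟩ := (((hint.const_mul_atTop hδ).eventually_gt_atTop
      (y T + δ * ∫ τ in (0:ℝ)..T, h τ)).and (eventually_ge_atTop T)).exists
    have h1 := anti (Set.self_mem_Ici) htT htT
    have h2 := hy0 t (hT0.le.trans htT)
    simp only at h1
    linarith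
  obtain ⟨t1, ht1, hy1⟩ := step1
  refine limsup_le_of_le (by isBoundedDefault) ?_
  filter_upwards [eventually_ge_atTop t1] with t ht
  have hfin : y t ≤ c := by
    refine image_le_of_deriv_right_lt_deriv_boundary' (f := y) (f' := deriv y) (a := t1) (b := t)
      (B := fun _ => c) (B' := fun _ => 0) ?_ ?_ hy1 continuousOn_const ?_ ?_ ⟨ht, le_rfl⟩
    · exact hyc.mono fun x hx => (hT0.le.trans ht1).trans hx.1
    · intro x hx
      exact (hyd x (hT0.trans_le (ht1.trans hx.1))).hasDerivAt.hasDerivWithinAt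
    · intro x hx
      exact hasDerivWithinAt_const _ _ _
    · intro x hx hxc
      have h1 := key x (ht1.trans hx.1) hxc.ge
      have h2 := mul_pos hδ (hhpos x (hT0.le.trans (ht1.trans hx.1)))
      linarith
  exact_mod_cast hfin
end

section
/- (Lemma A.2.) Let c > 0 and 1 < γ < 2, and define φ(z) = c(z + z^γ) for z ≥ 0, which is a strictly increasing bijection of [0,∞) onto itself. Let y : [0,∞) → [0,∞) be continuous on [0,∞) and differentiable on (0,∞), and let f : [0,∞) → [0,∞) be continuous on [0,∞) and continuously differentiable on (0,∞), such that y'(t) ≤ −φ^{−1}(y(t)) + f(t) for all t > 0. Assume β := limsup_{t→∞} [f'(t)]⁻ is finite, where [z]⁻ = max{−z, 0}. Then there exists T > 0 such that for all t > T, y(t) ≤ C·(1 + β^{γ/(2−γ)} + f(t)^γ), where C = 3·(32(1+c))^{2/(2−γ)}. -/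
open Filter

lemma stmt16_aux (D D' : ℝ → ℝ) (T δ : ℝ) (hδ : 0 < δ)
    (hD : ∀ t, T ≤ t → HasDerivAt D (D' t) t)
    (h : ∀ t, T ≤ t → 0 ≤ D t → D' t ≤ -δ) :
    ∃ S, T ≤ S ∧ ∀ t, S < t → D t ≤ 0 := by
  have h1 : ∃ S, T ≤ S ∧ D S ≤ 0 := by
    by_contra! hcon
    have hT := hcon T le_rfl
    have hlt : T < T + D T / δ := by
      have := div_pos hT hδ
      linarith
    obtain ⟨x, hx, hxe⟩ := exists_hasDerivAt_eq_slope D D' hlt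
      (fun x hx => (hD x hx.1).continuousAt.continuousWithinAt)
      (fun x hx => hD x hx.1.le)
    have h2 := h x hx.1.le (hcon x hx.1.le).le
    have h3 := hcon _ hlt.le
    rw [hxe, div_le_iff₀ (by linarith)] at h2
    have : δ * (D T / δ) = D T := by field_simp
    nlinarith
  obtain ⟨S, hS, hDS⟩ := h1
  refine ⟨S, hS, fun t ht => ?_⟩
  have := image_le_of_deriv_right_lt_deriv_boundary (f := D) (f' := D') (a := S) (b := t)
    (B := fun _ => 0) (B' := fun _ => 0)
    (fun x hx => (hD x (hS.trans hx.1)).continuousAt.continuousWithinAt)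
    (fun x hx => (hD x (hS.trans hx.1)).hasDerivWithinAt) hDS
    (fun x => hasDerivAt_const x 0)
    (fun x hx he => by
      have := h x (hS.trans hx.1) he.ge
      linarith)
  exact this ⟨ht.le, le_rfl⟩

lemma stmt16_psi (c γ : ℝ) (hc : 0 < c) (hγ1 : 1 < γ) (ψ : ℝ → ℝ)
    (hψ : Set.InvOn ψ (fun z : ℝ => c * (z + z ^ γ)) (Set.Ici 0) (Set.Ici 0))
    (w x : ℝ) (hw : 0 ≤ w) (hx : c * (w + w ^ γ) ≤ x) : w ≤ ψ x := by
  have hwg : 0 ≤ w ^ γ := Real.rpow_nonneg hw _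
  have hwx : w ≤ x / c := by
    rw [le_div_iff₀ hc]; nlinarith
  have hcont : ContinuousOn (fun z : ℝ => c * (z + z ^ γ)) (Set.Icc w (x / c)) := by
    apply Continuous.continuousOn
    have : Continuous (fun z : ℝ => z ^ γ) := Real.continuous_rpow_const (by linarith)
    fun_prop
  have hxc : x ≤ c * (x / c + (x / c) ^ γ) := by
    have h1 : c * (x / c) = x := by field_simp
    have h2 : 0 ≤ (x / c) ^ γ := Real.rpow_nonneg (hw.trans hwx) _
    nlinarith
  obtain ⟨z, hz, hze⟩ := intermediate_value_Icc hwx hcont ⟨hx, hxc⟩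
  have := hψ.1 (show z ∈ Set.Ici (0:ℝ) from hw.trans hz.1)
  simp only at this hze
  rw [hze] at this
  rw [this]; exact hz.1

lemma stmt16_bound (c γ β F K : ℝ) (hc : 0 < c) (hγ1 : 1 < γ) (hγ2 : γ < 2) (hβ : 0 ≤ β)
    (hF : 0 ≤ F) (hK : K = (32 * (1 + c) * max 1 β) ^ (1 / (2 - γ))) (hK1 : 1 ≤ K) :
    c * ((2 * F + K) + (2 * F + K) ^ γ) ≤
      3 * (32 * (1 + c)) ^ (2 / (2 - γ)) * (1 + β ^ (γ / (2 - γ)) + F ^ γ) := by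
  have h2 : 0 < 2 - γ := by linarith
  set p := γ / (2 - γ) with hp
  have hp0 : 0 < p := by positivity
  have hpe : 2 / (2 - γ) = 1 + p := by rw [hp]; field_simp; ring
  have hm : (0:ℝ) < max 1 β := by positivity
  set A := 32 * (1 + c) with hA
  have hA1 : 1 ≤ A := by linarith
  have hKg : K ^ γ = A ^ p * (max 1 β) ^ p := by
    rw [hK, ← Real.rpow_mul (by positivity), ← Real.mul_rpow (by positivity) hm.le, hp]
    congr 1; field_simp
  have hmp : (max 1 β) ^ p ≤ 1 + β ^ p := by
    have := Real.rpow_nonneg hβ p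
    rcases le_total 1 β with h | h
    · rw [max_eq_right h]; linarith
    · rw [max_eq_left h, Real.one_rpow]; linarith
  have hAp : 1 ≤ A ^ p := Real.one_le_rpow hA1 hp0.le
  have hw1 : 1 ≤ 2 * F + K := by linarith
  have hww : 2 * F + K ≤ (2 * F + K) ^ γ := Real.self_le_rpow_of_one_le hw1 hγ1.le
  have hFg := Real.rpow_nonneg hF γ
  have h2g : (2:ℝ) ^ γ ≤ 4 := by
    have := Real.rpow_le_rpow_of_exponent_le (x := 2) (by norm_num) hγ2.le
    norm_num at this; exact this
  have h2g0 : 0 ≤ (2:ℝ) ^ γ := by positivity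
  have hKg0 : 0 ≤ K ^ γ := by positivity
  have hwg : (2 * F + K) ^ γ ≤ 4 * (4 * F ^ γ + K ^ γ) := by
    rcases le_total (2 * F) K with h | h
    · calc (2 * F + K) ^ γ ≤ (2 * K) ^ γ := Real.rpow_le_rpow (by linarith) (by linarith) (by linarith)
        _ = 2 ^ γ * K ^ γ := Real.mul_rpow (by norm_num) (by linarith)
        _ ≤ _ := by nlinarith
    · calc (2 * F + K) ^ γ ≤ (2 * (2 * F)) ^ γ := Real.rpow_le_rpow (by linarith) (by linarith) (by linarith)
        _ = 2 ^ γ * (2 ^ γ * F ^ γ) := by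
          rw [Real.mul_rpow (by norm_num) (by linarith), Real.mul_rpow (by norm_num) hF]
        _ ≤ 4 * (4 * F ^ γ) := by gcongr
        _ ≤ _ := by linarith
  rw [hpe, Real.rpow_add (by linarith), Real.rpow_one]
  have hbp := Real.rpow_nonneg hβ p
  calc c * ((2 * F + K) + (2 * F + K) ^ γ) ≤ c * (2 * (4 * (4 * F ^ γ + K ^ γ))) := by
        gcongr; linarith
    _ ≤ c * (2 * (4 * (4 * (A ^ p * F ^ γ) + A ^ p * (1 + β ^ p)))) := by
        rw [hKg]; gcongr
        nlinarith
    _ = (8 * c) * A ^ p * (1 + β ^ p) + (32 * c) * A ^ p * F ^ γ := by ring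
    _ ≤ (3 * A) * A ^ p * (1 + β ^ p) + (3 * A) * A ^ p * F ^ γ := by
        have e1 : 8 * c ≤ 3 * A := by linarith
        have e2 : 32 * c ≤ 3 * A := by linarith
        exact add_le_add
          (mul_le_mul_of_nonneg_right (mul_le_mul_of_nonneg_right e1 (by linarith)) (by linarith))
          (mul_le_mul_of_nonneg_right (mul_le_mul_of_nonneg_right e2 (by linarith)) hFg)
    _ = _ := by ring

lemma stmt16_deriv (c γ b w K : ℝ) (hc : 0 < c) (hγ1 : 1 < γ) (hγ2 : γ < 2) (hb : 0 ≤ b)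
    (hK1 : 1 ≤ K) (hKb : 12 * c * b ≤ K ^ (2 - γ)) (hw : K ≤ w) :
    c * (1 + γ * w ^ (γ - 1)) * (2 * b) ≤ w / 2 := by
  have hw0 : 0 < w := by linarith
  have h1 : 1 ≤ w ^ (γ - 1) := Real.one_le_rpow (by linarith) (by linarith)
  have h2 : K ^ (2 - γ) ≤ w ^ (2 - γ) := Real.rpow_le_rpow (by linarith) hw (by linarith)
  have h3 : w ^ (2 - γ) * w ^ (γ - 1) = w := by
    rw [← Real.rpow_add hw0]; ring_nf; simp
  have h4 : 1 + γ * w ^ (γ - 1) ≤ 3 * w ^ (γ - 1) := by nlinarith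
  calc c * (1 + γ * w ^ (γ - 1)) * (2 * b) ≤ c * (3 * w ^ (γ - 1)) * (2 * b) := by gcongr
    _ = (12 * c * b) * w ^ (γ - 1) / 2 := by ring
    _ ≤ w ^ (2 - γ) * w ^ (γ - 1) / 2 := by gcongr; linarith
    _ = w / 2 := by rw [h3]


/-- Lemma A.2: with `φ(z) = c(z + z^γ)`, `1 < γ < 2`, if `y' ≤ -φ⁻¹(y) + f` on `(0,∞)`
and `β = limsup_{t→∞} [f'(t)]⁻` is finite, then there is `T > 0` such that
`y(t) ≤ C (1 + β^{γ/(2-γ)} + f(t)^γ)` for all `t > T`, with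
`C = 3 (32(1+c))^{2/(2-γ)}`. -/
theorem stmt16 (c γ : ℝ) (hc : 0 < c) (hγ1 : 1 < γ) (hγ2 : γ < 2)
    (ψ y f : ℝ → ℝ)
    (hψ : Set.InvOn ψ (fun z : ℝ => c * (z + z ^ γ)) (Set.Ici 0) (Set.Ici 0))
    (hyc : ContinuousOn y (Set.Ici 0))
    (hyd : ∀ t : ℝ, 0 < t → DifferentiableAt ℝ y t)
    (hy0 : ∀ t : ℝ, 0 ≤ t → 0 ≤ y t)
    (hfc : ContinuousOn f (Set.Ici 0))
    (hfd : ∀ t : ℝ, 0 < t → DifferentiableAt ℝ f t)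
    (hfd' : ContinuousOn (deriv f) (Set.Ioi 0))
    (hf0 : ∀ t : ℝ, 0 ≤ t → 0 ≤ f t)
    (hode : ∀ t : ℝ, 0 < t → deriv y t ≤ -ψ (y t) + f t)
    (β : ℝ)
    (hβ : limsup (fun t : ℝ => ((max (-(deriv f t)) 0 : ℝ) : EReal)) atTop = (β : EReal)) :
    ∃ T : ℝ, 0 < T ∧ ∀ t : ℝ, T < t →
      y t ≤ 3 * (32 * (1 + c)) ^ (2 / (2 - γ)) * (1 + β ^ (γ / (2 - γ)) + f t ^ γ) := by
  have hβ0 : 0 ≤ β := by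
    by_contra! hneg
    have h1 : limsup (fun t : ℝ => ((max (-(deriv f t)) 0 : ℝ) : EReal)) atTop < ((0:ℝ) : EReal) := by
      rw [hβ]; exact_mod_cast hneg
    obtain ⟨t, ht⟩ := (eventually_lt_of_limsup_lt h1).exists
    have ht' : max (-(deriv f t)) 0 < 0 := by exact_mod_cast ht
    exact absurd (le_max_right (-(deriv f t)) 0) (not_le.mpr ht')
  have hev : ∀ᶠ t in atTop, -(β + 1) < deriv f t := by
    have h1 : limsup (fun t : ℝ => ((max (-(deriv f t)) 0 : ℝ) : EReal)) atTop
        < ((β + 1 : ℝ) : EReal) := by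
      rw [hβ]; exact_mod_cast lt_add_one β
    filter_upwards [eventually_lt_of_limsup_lt h1] with t ht
    have ht' : max (-(deriv f t)) 0 < β + 1 := by exact_mod_cast ht
    have := le_max_left (-(deriv f t)) 0
    linarith
  obtain ⟨T₀, hT₀⟩ := eventually_atTop.mp hev
  have h2γ : 0 < 2 - γ := by linarith
  have hm1 : (1:ℝ) ≤ max 1 β := le_max_left _ _
  have hmβ : β ≤ max 1 β := le_max_right _ _
  obtain ⟨K, hK⟩ : ∃ K, K = (32 * (1 + c) * max 1 β) ^ (1 / (2 - γ)) := ⟨_, rfl⟩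
  have hK1 : 1 ≤ K := by
    rw [hK]
    exact Real.one_le_rpow (by nlinarith) (by positivity)
  have hKp : K ^ (2 - γ) = 32 * (1 + c) * max 1 β := by
    rw [hK, ← Real.rpow_mul (by positivity), one_div, inv_mul_cancel₀ h2γ.ne', Real.rpow_one]
  have hKb : 12 * c * (β + 1) ≤ K ^ (2 - γ) := by
    rw [hKp]; nlinarith
  have hmax : ∀ t, max T₀ 1 ≤ t → T₀ ≤ t ∧ 0 < t := fun t ht =>
    ⟨(le_max_left _ _).trans ht, by have := (le_max_right T₀ 1).trans ht; linarith⟩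
  obtain ⟨S, hS, hSD⟩ := stmt16_aux
    (fun t => y t - c * ((2 * f t + K) + (2 * f t + K) ^ γ))
    (fun t => deriv y t - c * (2 * deriv f t + (2 * deriv f t) * γ * (2 * f t + K) ^ (γ - 1)))
    (max T₀ 1) (K / 2) (by linarith)
    (fun t ht => by
      have ht0 := (hmax t ht).2
      have hf := hf0 t ht0.le
      have hw : HasDerivAt (fun t => 2 * f t + K) (2 * deriv f t) t :=
        ((hfd t ht0).hasDerivAt.const_mul 2).add_const K
      exact (hyd t ht0).hasDerivAt.sub
        ((hw.add (hw.rpow_const (Or.inr hγ1.le))).const_mul c))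
    (fun t ht hD => by
      have ht0 := (hmax t ht).2
      have hf := hf0 t ht0.le
      have hd := hT₀ t (hmax t ht).1
      have h1 := stmt16_psi c γ hc hγ1 ψ hψ (2 * f t + K) (y t) (by linarith) (by linarith)
      have h2 := hode t ht0
      have h3 := stmt16_deriv c γ (β + 1) (2 * f t + K) K hc hγ1 hγ2 (by linarith) hK1 hKb
        (by linarith)
      have h4 : 0 ≤ (2 * f t + K) ^ (γ - 1) := Real.rpow_nonneg (by linarith) _
      have h5 : 0 ≤ c * (1 + γ * (2 * f t + K) ^ (γ - 1)) := by positivity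
      have h6 := mul_le_mul_of_nonneg_left hd.le h5
      linarith)
  refine ⟨S, (hmax S hS).2, fun t ht => ?_⟩
  have h1 := hSD t ht
  have h2 := stmt16_bound c γ β (f t) K hc hγ1 hγ2 hβ0
    (hf0 t (hmax t (hS.trans ht.le)).2.le) hK hK1
  linarith
end

section
/- (Lemma A.3.) Let T ∈ ℝ. Let y, f : [T,∞) → [0,∞) be continuous with y differentiable on (T,∞), and let h, g : [T,∞) → (0,∞) be continuous with g differentiable on (T,∞), such that y'(t) ≤ −h(t)·y(t) + f(t) for all t > T. If ∫_T^∞ h(τ) dτ = ∞ and lim_{t→∞} g'(t)/(g(t)h(t)) = 0, then limsup_{t→∞} (g(t)·y(t)) ≤ limsup_{t→∞} (g(t)·f(t)/h(t)). -/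
open Filter
open scoped Topology

/-- Lemma A.3: if `y' ≤ -h·y + f` on `(T,∞)`, `∫_T^∞ h = ∞` and
`g'/(g h) → 0` at infinity, then
`limsup (g·y) ≤ limsup (g·f/h)` (limits superior taken in the extended reals). -/
theorem stmt17 (T : ℝ) (y f h g : ℝ → ℝ)
    (hyc : ContinuousOn y (Set.Ici T))
    (hyd : ∀ t : ℝ, T < t → DifferentiableAt ℝ y t)
    (hy0 : ∀ t : ℝ, T ≤ t → 0 ≤ y t)
    (hfc : ContinuousOn f (Set.Ici T)) (hf0 : ∀ t : ℝ, T ≤ t → 0 ≤ f t)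
    (hhc : ContinuousOn h (Set.Ici T)) (hh0 : ∀ t : ℝ, T ≤ t → 0 < h t)
    (hgc : ContinuousOn g (Set.Ici T)) (hg0 : ∀ t : ℝ, T ≤ t → 0 < g t)
    (hgd : ∀ t : ℝ, T < t → DifferentiableAt ℝ g t)
    (hode : ∀ t : ℝ, T < t → deriv y t ≤ -h t * y t + f t)
    (hint : Tendsto (fun t : ℝ => ∫ τ in T..t, h τ) atTop atTop)
    (hlim : Tendsto (fun t : ℝ => deriv g t / (g t * h t)) atTop (𝓝 0)) :
    limsup (fun t : ℝ => ((g t * y t : ℝ) : EReal)) atTop ≤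
      limsup (fun t : ℝ => ((g t * f t / h t : ℝ) : EReal)) atTop := by
  refine le_of_forall_gt_imp_ge_of_dense fun C hC => ?_
  obtain ⟨c, hLc, hcC⟩ := EReal.lt_iff_exists_real_btwn.1 hC
  obtain ⟨c', hLc', hcc⟩ := EReal.lt_iff_exists_real_btwn.1 hLc
  have hcc : c' < c := by exact_mod_cast hcc
  refine le_trans ?_ hcC.le
  have e1 : ∀ᶠ t in atTop, ((g t * f t / h t : ℝ) : EReal) < (c' : EReal) :=
    eventually_lt_of_limsup_lt hLc'
  have hc' : 0 < c' := by
    obtain ⟨t, h1, h2⟩ := (e1.and (eventually_ge_atTop T)).exists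
    have h1 : g t * f t / h t < c' := by exact_mod_cast h1
    have : 0 ≤ g t * f t / h t :=
      div_nonneg (mul_nonneg (hg0 t h2).le (hf0 t h2)) (hh0 t h2).le
    linarith
  have hc : 0 < c := hc'.trans hcc
  obtain ⟨a, ha⟩ : ∃ a, a = c' / c := ⟨_, rfl⟩
  have ha0 : 0 < a := ha ▸ div_pos hc' hc
  have ha1 : a < 1 := by rw [ha, div_lt_one hc]; exact hcc
  have hac : a * c = c' := by rw [ha]; field_simp
  have e2 : ∀ᶠ t in atTop, deriv g t / (g t * h t) < 1 - a :=
    hlim.eventually_lt_const (by linarith)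
  obtain ⟨S, hS⟩ := eventually_atTop.1 ((e1.and e2).and (eventually_gt_atTop T))
  have hST : T < S := (hS S le_rfl).2
  -- differential inequality
  have key : ∀ t, S ≤ t → deriv g t * y t + g t * deriv y t + a * h t * (g t * y t - c) ≤ 0 := by
    intro t ht
    obtain ⟨⟨h1, h2⟩, h3⟩ := hS t ht
    have h1 : g t * f t / h t < c' := by exact_mod_cast h1
    have hh := hh0 t h3.le
    have hg := hg0 t h3.le
    have hy := hy0 t h3.le
    rw [div_lt_iff₀ hh] at h1
    rw [div_lt_iff₀ (mul_pos hg hh)] at h2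
    have h4 := mul_le_mul_of_nonneg_left (hode t h3) hg.le
    have h5 := mul_le_mul_of_nonneg_right h2.le hy
    have h6 : a * h t * c = c' * h t := by rw [← hac]; ring
    nlinarith
  have hH : ∀ t, T < t → HasDerivAt (fun t => ∫ τ in T..t, h τ) (h t) t := by
    intro t ht
    refine intervalIntegral.integral_hasDerivAt_right ?_ ?_ ?_
    · refine ContinuousOn.intervalIntegrable (hhc.mono ?_)
      rw [Set.uIcc_of_le ht.le]
      exact Set.Icc_subset_Ici_self
    · exact (hhc.mono Set.Ioi_subset_Ici_self).stronglyMeasurableAtFilter isOpen_Ioi t ht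
    · exact hhc.continuousAt (Ici_mem_nhds ht)
  obtain ⟨H, hHdef⟩ : ∃ H : ℝ → ℝ, H = fun t => ∫ τ in T..t, h τ := ⟨_, rfl⟩
  rw [← hHdef] at hH hint
  have hd : ∀ t, S ≤ t → HasDerivAt (fun t => (g t * y t - c) * Real.exp (a * H t))
      ((deriv g t * y t + g t * deriv y t) * Real.exp (a * H t) +
        (g t * y t - c) * (Real.exp (a * H t) * (a * h t))) t := by
    intro t ht
    have h3 := (hS t ht).2
    exact (((hgd t h3).hasDerivAt.mul (hyd t h3).hasDerivAt).sub_const c).mul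
      (((hH t h3).const_mul a).exp)
  have hanti : AntitoneOn (fun t => (g t * y t - c) * Real.exp (a * H t)) (Set.Ici S) := by
    refine antitoneOn_of_deriv_nonpos (convex_Ici S)
      (fun t ht => (hd t ht).continuousAt.continuousWithinAt) ?_ ?_
    · intro t ht
      rw [interior_Ici] at ht
      exact (hd t (le_of_lt ht)).differentiableAt.differentiableWithinAt
    · intro t ht
      rw [interior_Ici] at ht
      rw [(hd t (le_of_lt ht)).deriv]
      have h1 := mul_nonpos_of_nonpos_of_nonneg (key t (le_of_lt ht)) (Real.exp_pos (a * H t)).le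
      linarith
  obtain ⟨K, hK⟩ : ∃ K, K = (g S * y S - c) * Real.exp (a * H S) := ⟨_, rfl⟩
  have hb : ∀ t, S ≤ t → g t * y t ≤ c + K * Real.exp (-(a * H t)) := by
    intro t ht
    have h1 : (g t * y t - c) * Real.exp (a * H t) ≤ K := by
      rw [hK]; exact hanti (Set.mem_Ici.2 le_rfl) ht ht
    have h2 := mul_le_mul_of_nonneg_right h1 (Real.exp_pos (-(a * H t))).le
    rw [mul_assoc, ← Real.exp_add, add_neg_cancel, Real.exp_zero] at h2
    linarith
  have hlim2 : Tendsto (fun t => c + K * Real.exp (-(a * H t))) atTop (𝓝 c) := by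
    have h1 : Tendsto (fun t => Real.exp (-(a * H t))) atTop (𝓝 0) :=
      Real.tendsto_exp_neg_atTop_nhds_zero.comp (hint.const_mul_atTop ha0)
    simpa using (h1.const_mul K).const_add c
  have hlim3 : Tendsto (fun t => ((c + K * Real.exp (-(a * H t)) : ℝ) : EReal)) atTop
      (𝓝 (c : EReal)) := (continuous_coe_real_ereal.tendsto c).comp hlim2
  rw [← hlim3.limsup_eq]
  refine limsup_le_limsup ?_
  filter_upwards [eventually_ge_atTop S] with t ht
  exact EReal.coe_le_coe_iff.2 (hb t ht)
end
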